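/- For every η₁ > 0 there exist an integer n₀ = n₀(η₁) and a real η₂ = η₂(η₁) > 0 such that the following holds: every oriented graph G on n ≥ n₀ vertices with minimum semidegree δ⁰(G) ≥ (1/2 − η₂)n contains at least (1/2 − η₁)n pairwise edge-disjoint Hamilton cycles. -/

import Mathlib

/-- The outdegree of a vertex `x` in the digraph with adjacency relation `G`. -/
noncomputable def outDeg {V : Type*} (G : V → V → Prop) (x : V) : ℕ :=
  Nat.card {y : V // G x y}

/-- The indegree of a vertex `x` in the digraph with adjacency relation `G`. -/
noncomputable def inDeg {V : Type*} (G : V → V → Prop) (x : V) : ℕ :=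
  Nat.card {y : V // G y x}

/-- An oriented graph: no loops and no 2-cycles. -/
def IsOriented {V : Type*} (G : V → V → Prop) : Prop :=
  ∀ x y : V, G x y → ¬ G y x

/-- `f` is a Hamilton cycle of the digraph `G`. -/
def IsHamCycle {V : Type*} [Fintype V] (G : V → V → Prop)
    (f : ZMod (Fintype.card V) → V) : Prop :=
  Function.Bijective f ∧ ∀ i, G (f i) (f (i + 1))

section Lists

variable {V : Type*}

/-- The vertices of a system of paths, each given by its first vertex and the rest. -/
def pathVerts (L : List (V × List V)) : List V := L.flatMap fun p => p.1 :: p.2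

@[simp] theorem pathVerts_cons (x : V) (t : List V) (L : List (V × List V)) :
    pathVerts ((x, t) :: L) = x :: (t ++ pathVerts L) := rfl

theorem pathVerts_perm {L L' : List (V × List V)} (h : L.Perm L') :
    (pathVerts L).Perm (pathVerts L') := h.flatMap_right _

theorem mem_pathVerts_of_mem {L : List (V × List V)} {p : V × List V} (hp : p ∈ L) :
    p.1 ∈ pathVerts L := List.mem_flatMap.2 ⟨p, hp, by simp⟩

theorem nodup_map_fst {L : List (V × List V)} (hd : (pathVerts L).Nodup) :
    (L.map Prod.fst).Nodup := by
  refine List.Nodup.sublist ?_ hd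
  clear hd
  induction L with
  | nil => simp
  | cons p L ihL =>
    obtain ⟨x, t⟩ := p
    simp only [List.map_cons, pathVerts_cons]
    exact (ihL.trans (List.sublist_append_right _ _)).cons_cons _

theorem exists_perm_cons_of_mem_fst {L : List (V × List V)} {v : V} (h : v ∈ L.map Prod.fst) :
    ∃ t L₀, L.Perm ((v, t) :: L₀) := by
  classical
  obtain ⟨⟨_, t⟩, hp, rfl⟩ := List.mem_map.1 h
  exact ⟨t, _, List.perm_cons_erase hp⟩

open Classical in
/-- A form of the Gallai–Milgram theorem: a path system can be replaced by one on the same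
vertices which has as many paths as some independent set has elements. -/
theorem exists_paths_of_independent (D : V → V → Prop) : ∀ (n : ℕ) (L : List (V × List V)),
    (pathVerts L).length + L.length ≤ n → (∀ p ∈ L, List.IsChain D (p.1 :: p.2)) →
    (pathVerts L).Nodup →
    ∃ L' : List (V × List V), (∀ p ∈ L', List.IsChain D (p.1 :: p.2)) ∧
      (pathVerts L').Perm (pathVerts L) ∧ L'.map Prod.fst ⊆ L.map Prod.fst ∧
      ∃ I : Finset V, (∀ x ∈ I, x ∈ pathVerts L) ∧ I.card = L'.length ∧
        ∀ x ∈ I, ∀ y ∈ I, x ≠ y → ¬ D x y := by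
  intro n
  induction n with
  | zero =>
    intro L hn hc hd
    obtain rfl : L = [] := List.length_eq_zero_iff.1 (by omega)
    exact ⟨[], by simp, by simp, by simp, ∅, by simp⟩
  | succ n ih =>
    intro L hn hc hd
    have hfst := nodup_map_fst hd
    by_cases hind : ∀ x ∈ L.map Prod.fst, ∀ y ∈ L.map Prod.fst, x ≠ y → ¬ D x y
    · refine ⟨L, hc, List.Perm.refl _, fun _ h => h, (L.map Prod.fst).toFinset, ?_, ?_, ?_⟩
      · intro x hx
        rw [List.mem_toFinset, List.mem_map] at hx
        obtain ⟨p, hp, rfl⟩ := hx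
        exact mem_pathVerts_of_mem hp
      · rw [List.toFinset_card_of_nodup hfst, List.length_map]
      · intro x hx y hy
        exact hind x (List.mem_toFinset.1 hx) y (List.mem_toFinset.1 hy)
    push Not at hind
    obtain ⟨v₁, h₁, v₂, h₂, hne, hD⟩ := hind
    obtain ⟨⟨_, l₁⟩, hp₁, rfl⟩ := List.mem_map.1 h₁
    obtain ⟨⟨_, l₂⟩, hp₂, rfl⟩ := List.mem_map.1 h₂
    rename_i v₁ v₂
    simp only at hne hD
    obtain ⟨L₀, hL₀⟩ : ∃ L₀, L.Perm ((v₁, l₁) :: (v₂, l₂) :: L₀) := by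
      refine ⟨(L.erase (v₁, l₁)).erase (v₂, l₂), (List.perm_cons_erase hp₁).trans ?_⟩
      refine List.Perm.cons _ (List.perm_cons_erase ?_)
      refine (List.mem_erase_of_ne ?_).2 hp₂
      intro h
      exact hne (congrArg Prod.fst h).symm
    have hV := pathVerts_perm hL₀
    have hlen := hL₀.length_eq
    have hVl := hV.length_eq
    have hd' := hV.nodup_iff.1 hd
    have hM := hL₀.map Prod.fst
    have hc' : ∀ p ∈ (v₁, l₁) :: (v₂, l₂) :: L₀, List.IsChain D (p.1 :: p.2) :=
      fun p hp => hc p (hL₀.mem_iff.2 hp)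
    simp only [List.forall_mem_cons] at hc'
    obtain ⟨hc₁, hc₂, hc₀⟩ := hc'
    simp only [pathVerts_cons, List.length_cons, List.length_append, List.map_cons]
      at hV hlen hVl hd' hM
    have key : ∀ L₁ : List (V × List V), (pathVerts L₁).Perm (pathVerts L) →
        L₁.length < L.length → (∀ p ∈ L₁, List.IsChain D (p.1 :: p.2)) →
        L₁.map Prod.fst ⊆ L.map Prod.fst → ∃ L' : List (V × List V),
        (∀ p ∈ L', List.IsChain D (p.1 :: p.2)) ∧
        (pathVerts L').Perm (pathVerts L) ∧ L'.map Prod.fst ⊆ L.map Prod.fst ∧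
        ∃ I : Finset V, (∀ x ∈ I, x ∈ pathVerts L) ∧ I.card = L'.length ∧
          ∀ x ∈ I, ∀ y ∈ I, x ≠ y → ¬ D x y := by
      intro L₁ hp hl hch hs
      obtain ⟨L', h1, h2, h3, I, h4, h5, h6⟩ := ih L₁ (by rw [hp.length_eq]; omega) hch
        (hp.nodup_iff.2 hd)
      exact ⟨L', h1, h2.trans hp, fun x hx => hs (h3 hx), I, fun x hx => hp.mem_iff.1 (h4 x hx),
        h5, h6⟩
    have hsub : ∀ x, x = v₁ ∨ x ∈ L₀.map Prod.fst → x ∈ L.map Prod.fst := by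
      intro x hx
      rw [hM.mem_iff]
      simp only [List.mem_cons]
      tauto
    cases l₁ with
    | nil =>
      refine key ((v₁, v₂ :: l₂) :: L₀) ?_ (by simp; omega) ?_ ?_
      · exact hV.symm
      · simp only [List.forall_mem_cons]
        exact ⟨List.isChain_cons_cons.2 ⟨hD, hc₂⟩, hc₀⟩
      · intro x hx
        apply hsub
        simpa using hx
    | cons v l =>
      have hc₁' := List.isChain_cons_cons.1 hc₁
      obtain ⟨L', h1, h2, h3, I, h4, h5, h6⟩ := ih ((v, l) :: (v₂, l₂) :: L₀)
        (by simp only [pathVerts_cons, List.length_cons, List.length_append] at hVl ⊢; omega)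
        (by simp only [List.forall_mem_cons]; exact ⟨hc₁'.2, hc₂, hc₀⟩) (by
          simp only [pathVerts_cons] at hd' ⊢
          exact (List.nodup_cons.1 hd').2)
      simp only [pathVerts_cons, List.map_cons, List.cons_append] at h2 h3 hV
      have hd'' : (pathVerts L').Nodup := h2.nodup_iff.2 (List.nodup_cons.1 hd').2
      have hfst' := nodup_map_fst hd''
      have hmemI : ∀ x ∈ I, x ∈ pathVerts L := by
        intro x hx
        have := h4 x hx
        simp only [pathVerts_cons] at this
        exact hV.mem_iff.2 (List.mem_cons_of_mem _ this)
      have attach : ∀ w l' L₃, L'.Perm ((w, l') :: L₃) → D v₁ w →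
          (∀ x ∈ L₃.map Prod.fst, x ∈ L.map Prod.fst) → ∃ L' : List (V × List V),
          (∀ p ∈ L', List.IsChain D (p.1 :: p.2)) ∧
          (pathVerts L').Perm (pathVerts L) ∧ L'.map Prod.fst ⊆ L.map Prod.fst ∧
          ∃ I : Finset V, (∀ x ∈ I, x ∈ pathVerts L) ∧ I.card = L'.length ∧
            ∀ x ∈ I, ∀ y ∈ I, x ≠ y → ¬ D x y := by
        intro w l' L₃ hp hw hs
        refine ⟨(v₁, w :: l') :: L₃, ?_, ?_, ?_, I, hmemI, ?_, h6⟩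
        · have := fun p hq => h1 p (hp.mem_iff.2 hq)
          simp only [List.forall_mem_cons] at this ⊢
          exact ⟨List.isChain_cons_cons.2 ⟨hw, this.1⟩, this.2⟩
        · refine List.Perm.trans ?_ hV.symm
          exact List.Perm.cons _ ((pathVerts_perm hp).symm.trans h2)
        · intro x hx
          rw [List.map_cons, List.mem_cons] at hx
          rcases hx with rfl | hx
          · exact hsub _ (Or.inl rfl)
          · exact hs x hx
        · rw [h5, hp.length_eq]; rfl
      by_cases hv : v ∈ L'.map Prod.fst
      · obtain ⟨l', L₃, hp⟩ := exists_perm_cons_of_mem_fst hv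
        refine attach v l' L₃ hp hc₁'.1 fun x hx => ?_
        have hpm := hp.map Prod.fst
        have hx' := h3 (hpm.mem_iff.2 (List.mem_cons_of_mem _ hx))
        have hxv : x ≠ v := by
          rintro rfl
          exact (List.nodup_cons.1 (hpm.nodup_iff.1 hfst')).1 hx
        rw [hM.mem_iff]
        simp only [List.mem_cons] at hx' ⊢
        tauto
      have h3' : ∀ x ∈ L'.map Prod.fst, x = v₂ ∨ x ∈ L₀.map Prod.fst := by
        intro x hx
        have hx' := h3 hx
        have hxv : x ≠ v := fun h => hv (h ▸ hx)
        simp only [List.mem_cons] at hx'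
        tauto
      by_cases hv₂ : v₂ ∈ L'.map Prod.fst
      · obtain ⟨l', L₃, hp⟩ := exists_perm_cons_of_mem_fst hv₂
        refine attach v₂ l' L₃ hp hD fun x hx => ?_
        have hx' := h3' x ((hp.map Prod.fst).mem_iff.2 (List.mem_cons_of_mem _ hx))
        rw [hM.mem_iff]
        simp only [List.mem_cons]
        tauto
      · have h3'' : L'.map Prod.fst ⊆ L₀.map Prod.fst := fun x hx =>
          (h3' x hx).resolve_left fun h => hv₂ (h ▸ hx)
        have hle := (List.subperm_of_subset hfst' h3'').length_le
        simp only [List.length_map] at hle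
        refine key ((v₁, []) :: L') ?_ (by simp; omega) ?_ ?_
        · exact (List.Perm.cons _ h2).trans hV.symm
        · simp only [List.forall_mem_cons]
          exact ⟨List.isChain_singleton _, h1⟩
        · intro x hx
          rw [List.map_cons, List.mem_cons] at hx
          exact hsub x (hx.imp_right fun h => h3'' h)

/-- If every independent subset of `R` has at most `α` elements, then `R` is covered by at most
`α` disjoint paths. -/
theorem exists_path_cover (D : V → V → Prop) (R : Finset V) (α : ℕ)
    (hα : ∀ I ⊆ R, (∀ x ∈ I, ∀ y ∈ I, x ≠ y → ¬ D x y) → I.card ≤ α) :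
    ∃ L : List (List V), (∀ l ∈ L, l ≠ [] ∧ List.IsChain D l) ∧ L.flatten.Perm R.toList ∧
      L.length ≤ α := by
  have hv : pathVerts (R.toList.map fun x => (x, ([] : List V))) = R.toList := by
    generalize R.toList = l
    induction l with
    | nil => rfl
    | cons x l ih => rw [List.map_cons, pathVerts_cons, ih, List.nil_append]
  obtain ⟨L, h1, h2, -, I, h4, h5, h6⟩ := exists_paths_of_independent D _
    (R.toList.map fun x => (x, ([] : List V))) le_rfl (by simp) (by
      rw [hv]; exact R.nodup_toList)
  rw [hv] at h2 h4
  refine ⟨L.map fun p => p.1 :: p.2, ?_, ?_, ?_⟩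
  · intro l hl
    obtain ⟨p, hp, rfl⟩ := List.mem_map.1 hl
    exact ⟨by simp, h1 p hp⟩
  · exact h2
  · rw [List.length_map, ← h5]
    exact hα I (fun x hx => Finset.mem_toList.1 (h4 x hx)) h6

end Lists

section Forest

variable {V : Type*} [DecidableEq V]

theorem exists_forest_paths_aux (M : V → Option V) (ρ : V → ℕ)
    (hρ : ∀ v w, M v = some w → ρ v < ρ w)
    (hinj : ∀ v v' w, M v = some w → M v' = some w → v = v') (T : Finset V) :
    (∀ v ∈ T, ∀ w, M v = some w → w ∈ T) →
    ∃ L : List (V × List V), (∀ p ∈ L, List.IsChain (fun v w => M v = some w) (p.1 :: p.2)) ∧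
      (pathVerts L).Perm T.toList ∧ (∀ p ∈ L, ∀ x ∈ (p.1 :: p.2).getLast?, M x = none) ∧
      (∀ p ∈ L, ∀ v ∈ T, M v ≠ some p.1) ∧ (∀ p ∈ L, ∀ x ∈ p.2, ∃ v ∈ T, M v = some x) ∧
      L.length = {v ∈ T | M v = none}.card := by
  induction T using Finset.induction_on_min_value ρ with
  | empty => exact fun _ => ⟨[], by simp, by simp [pathVerts], by simp, by simp, by simp, by simp⟩
  | insert a s ha hmin ih =>
    intro hcl
    have hcl' : ∀ v ∈ s, ∀ w, M v = some w → w ∈ s := by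
      intro v hv w hw
      refine Finset.mem_of_mem_insert_of_ne (hcl v (Finset.mem_insert_of_mem hv) w hw) ?_
      rintro rfl
      exact absurd (hρ v w hw) (not_lt.2 (hmin v hv))
    obtain ⟨L, h1, h2, h3, h4, h5, h6⟩ := ih hcl'
    have hT : (insert a s).toList.Perm (a :: s.toList) := Finset.toList_insert ha
    have hno : ∀ v ∈ insert a s, M v ≠ some a := by
      intro v hv h
      rcases Finset.mem_insert.1 hv with rfl | hv
      · exact lt_irrefl _ (hρ _ _ h)
      · exact absurd (hρ v a h) (not_lt.2 (hmin v hv))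
    cases hMa : M a with
    | none =>
      refine ⟨(a, []) :: L, ?_, ?_, ?_, ?_, ?_, ?_⟩
      · simp only [List.forall_mem_cons]; exact ⟨List.isChain_singleton _, h1⟩
      · exact (List.Perm.cons _ h2).trans hT.symm
      · simp only [List.forall_mem_cons]
        exact ⟨by simpa using hMa, h3⟩
      · simp only [List.forall_mem_cons]
        refine ⟨hno, fun p hp v hv => ?_⟩
        rcases Finset.mem_insert.1 hv with rfl | hv
        · simp [hMa]
        · exact h4 p hp v hv
      · simp only [List.forall_mem_cons]
        refine ⟨by simp, fun p hp x hx => ?_⟩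
        obtain ⟨v, hv, h⟩ := h5 p hp x hx
        exact ⟨v, Finset.mem_insert_of_mem hv, h⟩
      · rw [Finset.filter_insert, if_pos hMa, Finset.card_insert_of_notMem (by simp [ha]), ← h6]
        rfl
    | some w =>
      have hws : w ∈ s := by
        refine Finset.mem_of_mem_insert_of_ne (hcl a (Finset.mem_insert_self _ _) w hMa) ?_
        rintro rfl
        exact lt_irrefl _ (hρ _ _ hMa)
      have hw : w ∈ pathVerts L := h2.mem_iff.2 (Finset.mem_toList.2 hws)
      obtain ⟨⟨x, t⟩, hp, hwp⟩ := List.mem_flatMap.1 hw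
      obtain rfl : w = x := by
        rcases List.mem_cons.1 hwp with h | h
        · exact h
        · obtain ⟨v, hv, hvw⟩ := h5 _ hp w h
          exact absurd (hinj v a w hvw hMa ▸ hv) ha
      have hL := List.perm_cons_erase hp
      set L₀ := L.erase (w, t)
      have hall : ∀ {P : V × List V → Prop}, (∀ p ∈ L, P p) → P (w, t) ∧ ∀ p ∈ L₀, P p := by
        intro P h
        exact ⟨h _ hp, fun p hq => h p (hL.mem_iff.2 (List.mem_cons_of_mem _ hq))⟩
      have hfst : ∀ p ∈ L₀, p.1 ≠ w := by
        have := (hL.map Prod.fst).nodup_iff.1 (nodup_map_fst (h2.nodup_iff.2 s.nodup_toList))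
        rw [List.map_cons, List.nodup_cons] at this
        exact fun p hq h => this.1 (List.mem_map.2 ⟨p, hq, h⟩)
      refine ⟨(a, w :: t) :: L₀, ?_, ?_, ?_, ?_, ?_, ?_⟩
      · simp only [List.forall_mem_cons]
        exact ⟨List.isChain_cons_cons.2 ⟨hMa, (hall h1).1⟩, (hall h1).2⟩
      · exact (List.Perm.cons _ ((pathVerts_perm hL).symm.trans h2)).trans hT.symm
      · simp only [List.forall_mem_cons]
        refine ⟨?_, (hall h3).2⟩
        rw [List.getLast?_cons_cons]
        exact (hall h3).1
      · simp only [List.forall_mem_cons]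
        refine ⟨hno, fun p hq v hv => ?_⟩
        rcases Finset.mem_insert.1 hv with rfl | hv
        · rw [hMa]
          exact fun h => hfst p hq (Option.some_injective _ h).symm
        · exact (hall h4).2 p hq v hv
      · simp only [List.forall_mem_cons]
        have h5' : ∀ p ∈ L, ∀ x ∈ p.2, ∃ v ∈ insert a s, M v = some x := by
          intro p hp x hx
          obtain ⟨v, hv, h⟩ := h5 p hp x hx
          exact ⟨v, Finset.mem_insert_of_mem hv, h⟩
        exact ⟨⟨⟨a, Finset.mem_insert_self _ _, hMa⟩, (hall h5').1⟩, (hall h5').2⟩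
      · rw [Finset.filter_insert, if_neg (by simp [hMa]), ← h6, hL.length_eq]
        rfl

/-- An acyclic partial injection splits a closed set into paths. -/
theorem exists_forest_paths (M : V → Option V) (ρ : V → ℕ)
    (hρ : ∀ v w, M v = some w → ρ v < ρ w)
    (hinj : ∀ v v' w, M v = some w → M v' = some w → v = v') (T : Finset V)
    (hT : ∀ v ∈ T, ∀ w, M v = some w → w ∈ T) :
    ∃ L : List (List V), (∀ l ∈ L, l ≠ [] ∧ List.IsChain (fun v w => M v = some w) l) ∧
      L.flatten.Perm T.toList ∧ (∀ l ∈ L, ∀ x ∈ l.getLast?, M x = none) ∧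
      (∀ l ∈ L, ∀ x ∈ l.head?, ∀ v ∈ T, M v ≠ some x) ∧
      L.length = {v ∈ T | M v = none}.card := by
  obtain ⟨L, h1, h2, h3, h4, -, h6⟩ := exists_forest_paths_aux M ρ hρ hinj T hT
  refine ⟨L.map fun p => p.1 :: p.2, ?_, by exact h2, ?_, ?_, by rw [List.length_map, h6]⟩
  · simp only [List.forall_mem_map]
    exact fun p hp => ⟨by simp, h1 p hp⟩
  · simp only [List.forall_mem_map]
    exact h3
  · simp only [List.forall_mem_map]
    intro p hp x hx
    obtain rfl : p.1 = x := by simpa using hx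
    exact h4 p hp

end Forest

section Link

variable {β : Type*}

open Classical in
theorem exists_fresh_connector {S : β → β → Prop} {F Ys : List β} (hF : F.Nodup) {b b' : β}
    (h : Ys.length < (F.filter fun f => S b f ∧ S f b').length) :
    ∃ f ∈ F, f ∉ Ys ∧ S b f ∧ S f b' := by
  by_contra! hno
  refine absurd (List.subperm_of_subset (hF.filter _) fun f hf => ?_).length_le (not_le.2 h)
  rw [List.mem_filter, decide_eq_true_iff] at hf
  by_contra hfY
  exact hno f hf.1 hfY hf.2.1 hf.2.2

open Classical in
/-- Chains can be joined to one chain by connectors, if any two admissible elements are joined by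
at least as many connectors as there are chains. -/
theorem exists_link (S : β → β → Prop) (F : List β) (hF : F.Nodup) (Q : β → Prop) (K : ℕ)
    (hQ : ∀ b b', Q b → Q b' → K ≤ (F.filter fun f => S b f ∧ S f b').length) :
    ∀ L : List (List β), L ≠ [] → L.length ≤ K →
      (∀ l ∈ L, l ≠ [] ∧ l.IsChain S ∧ (∀ x ∈ l.head?, Q x) ∧ ∀ x ∈ l.getLast?, Q x) →
      ∃ P Ys : List β, P ≠ [] ∧ P.IsChain S ∧ Ys.Nodup ∧ Ys ⊆ F ∧ Ys.length + 1 = L.length ∧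
        P.Perm (L.flatten ++ Ys) ∧ (∀ x ∈ P.head?, Q x) ∧ ∀ x ∈ P.getLast?, Q x := by
  intro L
  induction L with
  | nil => simp
  | cons l L ih =>
    intro _ hK hL
    simp only [List.forall_mem_cons] at hL
    obtain ⟨⟨hl0, hlc, hlh, hll⟩, hL⟩ := hL
    rcases eq_or_ne L [] with rfl | hne
    · exact ⟨l, [], hl0, hlc, by simp, by simp, by simp, by simp, hlh, hll⟩
    obtain ⟨P, Ys, hP0, hPc, hYn, hYF, hYl, hPp, hPh, hPl⟩ := ih hne
      (by rw [List.length_cons] at hK; omega) hL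
    obtain ⟨f, hfF, hfY, hf1, hf2⟩ := exists_fresh_connector (S := S) (Ys := Ys) hF
      (b := l.getLast hl0) (b' := P.head hP0) (by
        have := hQ (l.getLast hl0) (P.head hP0) (hll _ (List.getLast_mem_getLast? hl0))
          (hPh _ (List.head_mem_head? hP0))
        rw [List.length_cons] at hK
        omega)
    refine ⟨l ++ f :: P, f :: Ys, by simp, ?_, List.nodup_cons.2 ⟨hfY, hYn⟩,
      List.cons_subset.2 ⟨hfF, hYF⟩, by simp [hYl], ?_, ?_, ?_⟩
    · rw [List.isChain_append, List.isChain_cons]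
      refine ⟨hlc, ⟨?_, hPc⟩, ?_⟩
      · intro y hy
        rw [List.head?_eq_some_head hP0] at hy
        cases hy
        exact hf2
      · intro x hx y hy
        rw [List.getLast?_eq_some_getLast hl0] at hx
        cases hx
        cases hy
        exact hf1
    · rw [List.perm_iff_count] at hPp ⊢
      intro a
      have := hPp a
      simp only [List.count_append, List.count_cons, List.flatten_cons] at this ⊢
      omega
    · intro x hx
      rw [List.head?_append_of_ne_nil _ hl0] at hx
      exact hlh x hx
    · intro x hx
      rw [List.getLast?_append_of_ne_nil _ (by simp)] at hx
      rw [List.getLast?_cons_of_ne_nil hP0] at hx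
      exact hPl x hx

open Classical in
/-- Cyclic version of `exists_link`. -/
theorem exists_cyclic_link (S : β → β → Prop) (F : List β) (hF : F.Nodup) (Q : β → Prop) (K : ℕ)
    (hQ : ∀ b b', Q b → Q b' → K ≤ (F.filter fun f => S b f ∧ S f b').length)
    (L : List (List β)) (hL0 : L ≠ []) (hK : L.length ≤ K)
    (hL : ∀ l ∈ L, l ≠ [] ∧ l.IsChain S ∧ (∀ x ∈ l.head?, Q x) ∧ ∀ x ∈ l.getLast?, Q x) :
    ∃ P Ys : List β, P ≠ [] ∧ P.IsChain S ∧ (∀ x ∈ P.getLast?, ∀ y ∈ P.head?, S x y) ∧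
      Ys.Nodup ∧ Ys ⊆ F ∧ P.Perm (L.flatten ++ Ys) := by
  obtain ⟨P, Ys, hP0, hPc, hYn, hYF, hYl, hPp, hPh, hPl⟩ := exists_link S F hF Q K hQ L hL0 hK hL
  obtain ⟨f, hfF, hfY, hf1, hf2⟩ := exists_fresh_connector (S := S) (Ys := Ys) hF
    (b := P.getLast hP0) (b' := P.head hP0) (by
      have := hQ (P.getLast hP0) (P.head hP0) (hPl _ (List.getLast_mem_getLast? hP0))
        (hPh _ (List.head_mem_head? hP0))
      omega)
  refine ⟨f :: P, f :: Ys, by simp, ?_, ?_, List.nodup_cons.2 ⟨hfY, hYn⟩,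
    List.cons_subset.2 ⟨hfF, hYF⟩, ?_⟩
  · rw [List.isChain_cons]
    refine ⟨fun y hy => ?_, hPc⟩
    rw [List.head?_eq_some_head hP0] at hy
    cases hy
    exact hf2
  · intro x hx y hy
    rw [List.getLast?_cons_of_ne_nil hP0, List.getLast?_eq_some_getLast hP0] at hx
    cases hx
    cases hy
    exact hf1
  · exact (List.Perm.cons _ hPp).trans List.perm_middle.symm

end Link

section Selection

variable {V τ : Type*}

/-- The vertices covered by a list of pairs. -/
def pairVerts (F : List (V × V)) : List V := F.flatMap fun p => [p.1, p.2]

theorem length_pairVerts (F : List (V × V)) : (pairVerts F).length = 2 * F.length := by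
  induction F with
  | nil => rfl
  | cons p F ih => simp_all [pairVerts]; omega

theorem exists_weighted_pair (T : Finset τ) (Γ : τ → V × V → Prop) [∀ t, DecidablePred (Γ t)]
    (w : τ → ℝ) (hw : ∀ t ∈ T, 0 ≤ w t) (P : Finset (V × V)) (hP : P.Nonempty)
    (h : ∀ t ∈ T, P.card ≤ 50 * (P.filter (Γ t)).card) :
    ∃ p ∈ P, ∑ t ∈ T, w t * (if Γ t p then 1 / 2 else 1) ≤ (99 / 100) * ∑ t ∈ T, w t := by
  refine Finset.exists_le_of_sum_le (g := fun _ => (99 / 100) * ∑ t ∈ T, w t) hP ?_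
  rw [Finset.sum_comm, Finset.sum_const, nsmul_eq_mul, ← mul_assoc, Finset.mul_sum]
  refine Finset.sum_le_sum fun t ht => ?_
  rw [← Finset.mul_sum, mul_comm]
  refine mul_le_mul_of_nonneg_right ?_ (hw t ht)
  have e : ∀ p, (if Γ t p then (1 / 2 : ℝ) else 1) = 1 - (1 / 2) * (if Γ t p then 1 else 0) := by
    intro p; split_ifs <;> norm_num
  simp only [e]
  rw [Finset.sum_sub_distrib, ← Finset.mul_sum, Finset.sum_boole, Finset.sum_const, nsmul_eq_mul]
  have : (P.card : ℝ) ≤ 50 * (P.filter (Γ t)).card := by exact_mod_cast h t ht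
  linarith

theorem lt_two_hundred_mul {m c : ℕ} {a : ℝ} (ha : a * (995 / 1000) ^ m < 1)
    (h : (1 / 2 : ℝ) ^ c ≤ a * (99 / 100) ^ m) : m ≤ 200 * c := by
  by_contra! hlt
  have hb : (198 / 199 : ℝ) ^ 200 ≤ 1 / 2 := by norm_num
  have h1 : (198 / 199 : ℝ) ^ m ≤ (1 / 2) ^ c := calc
    (198 / 199 : ℝ) ^ m ≤ (198 / 199) ^ (200 * c) :=
      pow_le_pow_of_le_one (by norm_num) (by norm_num) hlt.le
    _ = ((198 / 199) ^ 200) ^ c := pow_mul _ _ _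
    _ ≤ (1 / 2) ^ c := by gcongr
  have h2 : (99 / 100 : ℝ) ^ m = (995 / 1000) ^ m * (198 / 199) ^ m := by
    rw [← mul_pow]; norm_num
  have h3 : (0 : ℝ) < (198 / 199) ^ m := by positivity
  rw [h2] at h
  nlinarith

variable [DecidableEq V]

/-- Vertex-disjoint pairs can be chosen such that every test is passed by many of them. -/
theorem exists_selection (U X : Finset V) (T : Finset τ) (Γ : τ → V × V → Prop) (m : ℕ)
    (hT : (T.card : ℝ) * (995 / 1000) ^ m < 1) (hU : U.Nonempty)
    (h : ∀ X' : Finset V, X'.card ≤ X.card + 2 * m → ∀ t ∈ T, ∃ G : Finset (V × V),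
      (∀ p ∈ G, (p.1 ∈ U ∧ p.1 ∉ X') ∧ (p.2 ∈ U ∧ p.2 ∉ X') ∧ p.1 ≠ p.2 ∧ Γ t p) ∧
        U.card ^ 2 ≤ 50 * G.card) :
    ∃ F : List (V × V), (pairVerts F).Nodup ∧ (∀ v ∈ pairVerts F, v ∈ U ∧ v ∉ X) ∧
      F.length ≤ m ∧
      ∀ t ∈ T, ∃ H : List (V × V), H.Sublist F ∧ (∀ p ∈ H, Γ t p) ∧ m ≤ 200 * H.length := by
  classical
  rcases T.eq_empty_or_nonempty with rfl | hTne
  · exact ⟨[], by simp [pairVerts], by simp [pairVerts], by simp, by simp⟩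
  have key : ∀ k ≤ m, ∃ F : List (V × V), (pairVerts F).Nodup ∧
      (∀ v ∈ pairVerts F, v ∈ U ∧ v ∉ X) ∧ F.length = k ∧
      ∑ t ∈ T, (1 / 2 : ℝ) ^ (F.filter fun p => Γ t p).length ≤ T.card * (99 / 100) ^ k := by
    intro k
    induction k with
    | zero => exact fun _ => ⟨[], by simp [pairVerts], by simp [pairVerts], by simp, by simp⟩
    | succ k ih =>
      intro hk
      obtain ⟨F, hFn, hFU, hFl, hF⟩ := ih (by omega)
      let X' := X ∪ (pairVerts F).toFinset
      have hX' : X'.card ≤ X.card + 2 * m := by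
        refine (Finset.card_union_le _ _).trans ?_
        have := List.toFinset_card_le (pairVerts F)
        rw [length_pairVerts] at this
        omega
      let P := ((U ×ˢ U).filter fun p => p.1 ∉ X' ∧ p.2 ∉ X' ∧ p.1 ≠ p.2)
      have hPU : P.card ≤ U.card ^ 2 :=
        (Finset.card_filter_le _ _).trans (by rw [Finset.card_product, sq])
      have hcount : ∀ t ∈ T, U.card ^ 2 ≤ 50 * (P.filter (Γ t)).card := by
        intro t ht
        obtain ⟨G, hG, hGc⟩ := h X' hX' t ht
        refine hGc.trans (Nat.mul_le_mul_left _ (Finset.card_le_card fun p hp => ?_))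
        have := hG p hp
        simp only [P, Finset.mem_filter, Finset.mem_product]
        tauto
      have hPne : P.Nonempty := by
        obtain ⟨t, ht⟩ := hTne
        have h1 := hcount t ht
        have h2 : 0 < U.card ^ 2 := pow_pos (Finset.card_pos.2 hU) _
        have h3 := Finset.card_filter_le P (Γ t)
        exact Finset.card_pos.1 (by omega)
      obtain ⟨p, hp, hps⟩ := exists_weighted_pair T Γ
        (fun t => (1 / 2 : ℝ) ^ (F.filter fun p => Γ t p).length) (fun _ _ => by positivity)
        P hPne fun t ht => hPU.trans (hcount t ht)
      simp only [P, X', Finset.mem_filter, Finset.mem_product, Finset.mem_union, List.mem_toFinset,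
        not_or] at hp
      refine ⟨p :: F, ?_, ?_, by simp [hFl], ?_⟩
      · simp only [pairVerts, List.flatMap_cons, List.cons_append, List.nil_append,
          List.nodup_cons, List.mem_cons] at hFn hp ⊢
        tauto
      · simp only [pairVerts, List.flatMap_cons, List.cons_append, List.nil_append,
          List.mem_cons] at hFU hp ⊢
        rintro v (rfl | rfl | hv)
        · tauto
        · tauto
        · exact hFU v hv
      · refine le_trans (le_of_eq ?_) (hps.trans ((mul_le_mul_of_nonneg_left hF
          (by norm_num)).trans_eq (by ring)))
        refine Finset.sum_congr rfl fun t _ => ?_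
        by_cases hΓ : Γ t p <;> simp [hΓ, pow_succ]
  obtain ⟨F, hFn, hFU, hFl, hF⟩ := key m le_rfl
  refine ⟨F, hFn, hFU, hFl.le, fun t ht => ⟨F.filter fun p => Γ t p, List.filter_sublist,
    by simp, lt_two_hundred_mul hT (le_trans ?_ hF)⟩⟩
  exact Finset.single_le_sum (f := fun t => (1 / 2 : ℝ) ^ (F.filter fun p => Γ t p).length)
    (fun _ _ => by positivity) ht

end Selection

section Density

variable {V : Type*} [DecidableEq V]

theorem sum_sum_ge_of_near_tournament {f : V → V → ℝ} (hf0 : ∀ x y, 0 ≤ f x y)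
    (hf1 : ∀ x y, f x y + f y x ≤ 1) {U : Finset V}
    (hout : ∀ x ∈ U, (49 / 100 : ℝ) * U.card ≤ ∑ y ∈ U, f x y)
    (hin : ∀ x ∈ U, (49 / 100 : ℝ) * U.card ≤ ∑ y ∈ U, f y x)
    {S T : Finset V} (hS : S ⊆ U) (hT : T ⊆ U)
    (hSc : (49 / 100 : ℝ) * U.card ≤ S.card) (hTc : (49 / 100 : ℝ) * U.card ≤ T.card) :
    (U.card : ℝ) ^ 2 / 50 ≤ ∑ x ∈ S, ∑ y ∈ T, f x y := by
  set N : ℝ := (U.card : ℝ) with hN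
  have hN0 : 0 ≤ N := Nat.cast_nonneg _
  have mono : ∀ S' ⊆ S, ∀ T' ⊆ T, ∑ x ∈ S', ∑ y ∈ T', f x y ≤ ∑ x ∈ S, ∑ y ∈ T, f x y :=
    fun S' hS' T' hT' => (Finset.sum_le_sum fun x _ =>
      Finset.sum_le_sum_of_subset_of_nonneg hT' fun _ _ _ => hf0 _ _).trans
      (Finset.sum_le_sum_of_subset_of_nonneg hS' fun _ _ _ => Finset.sum_nonneg fun _ _ => hf0 _ _)
  have half : ∀ I : Finset V, 2 * ∑ x ∈ I, ∑ y ∈ I, f x y = ∑ x ∈ I, ∑ y ∈ I, (f x y + f y x) := by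
    intro I
    simp only [Finset.sum_add_distrib]
    rw [Finset.sum_comm (f := fun x y => f y x)]
    ring
  rcases le_or_gt (N / 4) ((S ∩ T).card : ℝ) with hI | hI
  · refine le_trans ?_ (mono (S ∩ T) Finset.inter_subset_left (S ∩ T) Finset.inter_subset_right)
    set I := S ∩ T
    have hIU : I ⊆ U := Finset.inter_subset_left.trans hS
    have key : ∀ x ∈ I, (I.card : ℝ) - N / 50 ≤ ∑ y ∈ I, (f x y + f y x) := by
      intro x hx
      have h1 := hout x (hIU hx)
      have h2 := hin x (hIU hx)
      have h3 : ∑ y ∈ U \ I, (f x y + f y x) ≤ (U \ I).card • (1 : ℝ) :=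
        Finset.sum_le_card_nsmul _ _ _ fun y _ => hf1 x y
      have h4 := Finset.sum_sdiff (f := fun y => f x y + f y x) hIU
      have h5 := Finset.card_sdiff_add_card_eq_card hIU
      have h6 : ((U \ I).card : ℝ) + I.card = N := by rw [hN]; exact_mod_cast h5
      rw [Finset.sum_add_distrib (s := U)] at h4
      rw [nsmul_eq_mul, mul_one] at h3
      linarith
    have h := Finset.card_nsmul_le_sum _ _ _ key
    rw [← half, nsmul_eq_mul] at h
    nlinarith
  · refine le_trans ?_ (mono (S \ T) Finset.sdiff_subset _ subset_rfl)
    set P := S \ T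
    have hPU : P ⊆ U := Finset.sdiff_subset.trans hS
    have hPc : (P.card : ℝ) + (S ∩ T).card = S.card := by
      exact_mod_cast Finset.card_sdiff_add_card_inter S T
    have hdis : Disjoint P T := Finset.sdiff_disjoint
    have hPT : P ∪ T ⊆ U := Finset.union_subset hPU hT
    have key : ∀ x ∈ P, (P.card : ℝ) - N / 50 ≤ ∑ y ∈ P, f x y + ∑ y ∈ T, f x y := by
      intro x hx
      have h1 := hout x (hPU hx)
      have h3 : ∑ y ∈ U \ (P ∪ T), f x y ≤ (U \ (P ∪ T)).card • (1 : ℝ) :=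
        Finset.sum_le_card_nsmul _ _ _ fun y _ => by linarith [hf1 x y, hf0 y x]
      have h4 := Finset.sum_sdiff (f := fun y => f x y) hPT
      have h5 := Finset.card_sdiff_add_card_eq_card hPT
      rw [Finset.card_union_of_disjoint hdis] at h5
      rw [Finset.sum_union hdis] at h4
      have h6 : ((U \ (P ∪ T)).card : ℝ) + (P.card + T.card) = N := by rw [hN]; exact_mod_cast h5
      rw [nsmul_eq_mul, mul_one] at h3
      linarith
    have h := Finset.card_nsmul_le_sum _ _ _ key
    rw [Finset.sum_add_distrib, nsmul_eq_mul] at h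
    have hP2 : 2 * ∑ x ∈ P, ∑ y ∈ P, f x y ≤ P.card • (P.card • (1 : ℝ)) := by
      rw [half]
      exact Finset.sum_le_card_nsmul _ _ _ fun x _ =>
        Finset.sum_le_card_nsmul _ _ _ fun y _ => hf1 x y
    rw [nsmul_eq_mul, nsmul_eq_mul, mul_one] at hP2
    nlinarith

/-- In an almost regular near-tournament, there are many edges from any almost half of the
vertices to any other almost half. -/
theorem card_edges_ge_of_near_tournament {D : V → V → Prop} [DecidableRel D]
    (hD : ∀ x y, D x y → ¬ D y x) {U : Finset V}
    (hout : ∀ x ∈ U, 49 * U.card ≤ 100 * (U.filter fun y => D x y).card)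
    (hin : ∀ x ∈ U, 49 * U.card ≤ 100 * (U.filter fun y => D y x).card)
    {S T : Finset V} (hS : S ⊆ U) (hT : T ⊆ U)
    (hSc : 49 * U.card ≤ 100 * S.card) (hTc : 49 * U.card ≤ 100 * T.card) :
    U.card ^ 2 ≤ 50 * ((S ×ˢ T).filter fun p => D p.1 p.2).card := by
  have cast : ∀ a b : ℕ, 49 * a ≤ 100 * b → (49 / 100 : ℝ) * a ≤ b := by
    intro a b h
    have : (49 * a : ℝ) ≤ 100 * b := by exact_mod_cast h
    linarith
  have h := sum_sum_ge_of_near_tournament (f := fun x y => if D x y then (1 : ℝ) else 0)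
    (fun x y => by split_ifs <;> norm_num)
    (fun x y => by
      have := hD x y
      split_ifs <;> first | (exfalso; tauto) | norm_num)
    (fun x hx => by simpa [Finset.sum_boole] using cast _ _ (hout x hx))
    (fun x hx => by simpa [Finset.sum_boole] using cast _ _ (hin x hx)) hS hT
    (cast _ _ hSc) (cast _ _ hTc)
  rw [← Finset.sum_product', Finset.sum_boole] at h
  have : ((U.card ^ 2 : ℕ) : ℝ) ≤ (50 * ((S ×ˢ T).filter fun p => D p.1 p.2).card : ℕ) := by
    push_cast
    linarith
  exact_mod_cast this

end Density

section Extension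

variable {V : Type*} [DecidableEq V]

theorem exists_mem_filter_notMem {U : Finset V} {p : V → Prop} [DecidablePred p] {Ys : List V}
    {c : ℕ} (hc : c ≤ (U.filter p).card) (h : Ys.length < c) : ∃ u ∈ U, p u ∧ u ∉ Ys := by
  obtain ⟨u, hu, huY⟩ := Finset.exists_mem_notMem_of_card_lt_card (s := Ys.toFinset)
    (lt_of_le_of_lt (List.toFinset_card_le Ys) (h.trans_le hc))
  rw [Finset.mem_filter] at hu
  exact ⟨u, hu.1, hu.2, by simpa using huY⟩

/-- Disjoint paths can be extended by distinct new vertices of `U` at both ends. -/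
theorem exists_extension (A : V → V → Prop) [DecidableRel A] (U : Finset V) (c : ℕ) :
    ∀ L : List (List V), 2 * L.length ≤ c →
      (∀ l ∈ L, l ≠ [] ∧ (∀ x ∈ l.head?, c ≤ (U.filter fun u => A u x).card) ∧
        ∀ x ∈ l.getLast?, c ≤ (U.filter fun u => A x u).card) →
      ∃ (L' : List (List V)) (Ys : List V), Ys.Nodup ∧ (∀ y ∈ Ys, y ∈ U) ∧
        Ys.length ≤ 2 * L.length ∧ L'.flatten.Perm (L.flatten ++ Ys) ∧ L'.length = L.length ∧
        ∀ l' ∈ L', ∃ l ∈ L, ∃ u u', l' = u :: (l ++ [u']) ∧ u ∈ U ∧ u' ∈ U ∧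
          (∀ x ∈ l.head?, A u x) ∧ ∀ x ∈ l.getLast?, A x u' := by
  intro L
  induction L with
  | nil => exact fun _ _ => ⟨[], [], by simp⟩
  | cons l L ih =>
    intro hc h
    rw [List.forall_mem_cons] at h
    rw [List.length_cons] at hc
    obtain ⟨⟨hl0, hlh, hll⟩, h⟩ := h
    obtain ⟨L', Ys, hn, hU, hYl, hp, hl, hL'⟩ := ih (by omega) h
    obtain ⟨u, huU, hu, huY⟩ := exists_mem_filter_notMem
      (hlh _ (List.head_mem_head? hl0)) (Ys := Ys) (by omega)
    obtain ⟨u', huU', hu', huY'⟩ := exists_mem_filter_notMem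
      (hll _ (List.getLast_mem_getLast? hl0)) (Ys := u :: Ys) (by rw [List.length_cons]; omega)
    refine ⟨(u :: (l ++ [u'])) :: L', u' :: u :: Ys, ?_, ?_, ?_, ?_, by simp [hl], ?_⟩
    · exact List.nodup_cons.2 ⟨huY', List.nodup_cons.2 ⟨huY, hn⟩⟩
    · simpa [huU, huU'] using hU
    · simp only [List.length_cons]; omega
    · rw [List.perm_iff_count] at hp ⊢
      intro a
      have := hp a
      simp only [List.flatten_cons, List.count_append, List.count_cons, List.count_nil] at this ⊢
      omega
    · rw [List.forall_mem_cons]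
      refine ⟨⟨l, by simp, u, u', rfl, huU, huU', ?_, ?_⟩, fun l' hl' => ?_⟩
      · simpa [List.head?_eq_some_head hl0] using hu
      · simpa [List.getLast?_eq_some_getLast hl0] using hu'
      · obtain ⟨k, hk, r⟩ := hL' l' hl'
        exact ⟨k, List.mem_cons_of_mem _ hk, r⟩

end Extension

section Absorb

variable {V : Type*}

/-- `B` is a cyclic sequence of nonempty paths, each followed by an edge to the next one. -/
structure IsCyclicPathList (E : V → V → Prop) (B : List (List V)) : Prop where
  paths : ∀ b ∈ B, b ≠ [] ∧ b.IsChain E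
  chain : B.IsChain fun a b => ∀ x ∈ a.getLast?, ∀ y ∈ b.head?, E x y
  closed : ∀ a ∈ B.getLast?, ∀ b ∈ B.head?, ∀ x ∈ a.getLast?, ∀ y ∈ b.head?, E x y

variable {E : V → V → Prop}

theorem IsCyclicPathList.replace {P Q : List (List V)} {a a' : List V}
    (h : IsCyclicPathList E (P ++ a :: Q)) (ha' : a' ≠ [] ∧ a'.IsChain E)
    (hh : a'.head? = a.head?) (hl : a'.getLast? = a.getLast?) :
    IsCyclicPathList E (P ++ a' :: Q) where
  paths b hb := by
    have := h.paths b
    simp only [List.mem_append, List.mem_cons] at hb this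
    rcases hb with hb | rfl | hb
    · tauto
    · exact ha'
    · tauto
  chain := by
    have := h.chain
    rw [List.isChain_append, List.isChain_cons] at this ⊢
    simpa [hh, hl] using this
  closed := by
    have := h.closed
    rcases P with _ | ⟨p, P⟩ <;> rcases Q.eq_nil_or_concat with rfl | ⟨Q', q, rfl⟩ <;>
      simp_all [List.getLast?_append, List.getLast?_cons]

/-- Vertices can be absorbed one after the other into edges which form paths of length one. -/
theorem IsCyclicPathList.exists_absorb [DecidableEq V] :
    ∀ (Z : List V) (B : List (List V)), IsCyclicPathList E B →
      (∀ v ∈ Z, ∃ H : Finset (V × V), Z.length ≤ H.card ∧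
        ∀ p ∈ H, [p.1, p.2] ∈ B ∧ E p.1 v ∧ E v p.2) →
      ∃ B', IsCyclicPathList E B' ∧ B'.flatten.Perm (B.flatten ++ Z) := by
  intro Z
  induction Z with
  | nil => exact fun B hB _ => ⟨B, hB, by simp⟩
  | cons v Z ih =>
    intro B hB h
    rw [List.forall_mem_cons] at h
    obtain ⟨⟨H, hHc, hH⟩, hZ⟩ := h
    rw [List.length_cons] at hHc
    obtain ⟨p, hp⟩ : H.Nonempty := Finset.card_pos.1 (by omega)
    obtain ⟨hpB, hp1, hp2⟩ := hH p hp
    obtain ⟨P, Q, rfl⟩ := List.append_of_mem hpB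
    have hB' := hB.replace (a' := [p.1, v, p.2]) (by simp [hp1, hp2]) (by simp) (by simp)
    obtain ⟨B', hB', hperm⟩ := ih _ hB' fun w hw => by
      obtain ⟨H, hHc, hH⟩ := hZ w hw
      refine ⟨H.erase p, ?_, fun q hq => ?_⟩
      · have := Finset.pred_card_le_card_erase (s := H) (a := p)
        rw [List.length_cons] at hHc
        omega
      · rw [Finset.mem_erase] at hq
        obtain ⟨h1, h2, h3⟩ := hH q hq.2
        refine ⟨?_, h2, h3⟩
        have : [q.1, q.2] ≠ [p.1, p.2] := by
          intro h
          simp only [List.cons.injEq, and_true] at h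
          exact hq.1 (Prod.ext h.1 h.2)
        simp only [List.mem_append, List.mem_cons] at h1 ⊢
        tauto
    refine ⟨B', hB', hperm.trans ?_⟩
    rw [List.perm_iff_count]
    intro a
    simp only [List.flatten_append, List.flatten_cons, List.count_append, List.count_cons,
      List.count_nil]
    omega

theorem IsCyclicPathList.flatten {B : List (List V)} (h : IsCyclicPathList E B) :
    B.flatten.IsChain E ∧ ∀ x ∈ B.flatten.getLast?, ∀ y ∈ B.flatten.head?, E x y := by
  have hnil : [] ∉ B := fun hB => (h.paths _ hB).1 rfl
  refine ⟨(List.isChain_flatten hnil).2 ⟨fun b hb => (h.paths b hb).2, h.chain⟩, ?_⟩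
  rcases B with _ | ⟨b, B⟩
  · simp
  have hb := (h.paths b (by simp)).1
  obtain ⟨B', b', hB'⟩ : ∃ B' b', b :: B = B' ++ [b'] :=
    ⟨(b :: B).dropLast, (b :: B).getLast (by simp), by simp [List.dropLast_append_getLast]⟩
  have hb' := (h.paths b' (by simp [hB'])).1
  intro x hx y hy
  refine h.closed b' (by simp [hB']) b (by simp) x ?_ y ?_
  · rw [hB', List.flatten_append, List.flatten_singleton,
      List.getLast?_append_of_ne_nil _ hb'] at hx
    exact hx
  · rw [List.flatten_cons, List.head?_append_of_ne_nil _ hb] at hy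
    exact hy

end Absorb

section EdgeSelection

variable {V τ : Type*} [DecidableEq V] {E : V → V → Prop}

open Classical in
/-- In an almost regular near-tournament, disjoint edges can be chosen such that many of them go
from each given almost half of the vertices to each given other one. -/
theorem exists_edge_selection (hE : ∀ x y, E x y → ¬ E y x) {U : Finset V} {d : ℕ}
    (hout : ∀ u ∈ U, U.card ≤ 2 * (U.filter fun y => E u y).card + d)
    (hin : ∀ u ∈ U, U.card ≤ 2 * (U.filter fun y => E y u).card + d)
    (hU : U.Nonempty) (hd : 200 * d ≤ U.card) (X : Finset V) (m : ℕ)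
    (hX : 500 * (X.card + 2 * m) ≤ U.card) (T : Finset τ)
    (hT : (T.card : ℝ) * (995 / 1000) ^ m < 1) (a b : τ → V → Prop)
    (ha : ∀ t ∈ T, U.card ≤ 2 * (U.filter fun y => a t y).card + d)
    (hb : ∀ t ∈ T, U.card ≤ 2 * (U.filter fun y => b t y).card + d) :
    ∃ F : List (V × V), (pairVerts F).Nodup ∧ (∀ v ∈ pairVerts F, v ∈ U ∧ v ∉ X) ∧
      F.length ≤ m ∧ (∀ p ∈ F, E p.1 p.2) ∧
      ∀ t ∈ T, ∃ H : List (V × V), H.Sublist F ∧ (∀ p ∈ H, a t p.1 ∧ b t p.2) ∧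
        m ≤ 200 * H.length := by
  obtain ⟨F, hFn, hFU, hFl, hF⟩ := exists_selection U X T
    (fun t p => E p.1 p.2 ∧ a t p.1 ∧ b t p.2) m hT hU (by
      intro X' hX' t ht
      refine ⟨(((U.filter fun y => a t y) \ X') ×ˢ ((U.filter fun y => b t y) \ X')).filter
        fun p => E p.1 p.2, ?_, ?_⟩
      · intro p hp
        simp only [Finset.mem_filter, Finset.mem_product, Finset.mem_sdiff] at hp
        have : p.1 ≠ p.2 := fun h => hE p.1 p.2 hp.2 (by rw [h] at hp ⊢; exact hp.2)
        tauto
      · have h1 := Finset.le_card_sdiff X' (U.filter fun y => a t y)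
        have h2 := Finset.le_card_sdiff X' (U.filter fun y => b t y)
        have h3 := ha t ht
        have h4 := hb t ht
        refine card_edges_ge_of_near_tournament hE (fun x hx => ?_) (fun x hx => ?_)
          (Finset.sdiff_subset.trans (Finset.filter_subset _ _))
          (Finset.sdiff_subset.trans (Finset.filter_subset _ _)) (by omega) (by omega)
        · have := hout x hx
          omega
        · have := hin x hx
          omega)
  have hsub : (F.filter fun p => E p.1 p.2).Sublist F := List.filter_sublist
  have hsub' : (pairVerts (F.filter fun p => E p.1 p.2)).Sublist (pairVerts F) :=
    (hsub.map fun p : V × V => [p.1, p.2]).flatten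
  refine ⟨F.filter fun p => E p.1 p.2, hFn.sublist hsub', fun v hv => hFU v (hsub'.subset hv),
    hsub.length_le.trans hFl, by simp, fun t ht => ?_⟩
  obtain ⟨H, hH, hHp, hHm⟩ := hF t ht
  refine ⟨H, ?_, fun p hp => (hHp p hp).2, hHm⟩
  have := hH.filter fun p => E p.1 p.2
  rwa [List.filter_eq_self.2 fun p hp => by simpa using (hHp p hp).1] at this

end EdgeSelection

section PathLink

variable {V : Type*} {E : V → V → Prop}

/-- The edges of `F` as paths of length one. -/
def pairPaths (F : List (V × V)) : List (List V) := F.map fun p => [p.1, p.2]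

theorem flatten_pairPaths (F : List (V × V)) : (pairPaths F).flatten = pairVerts F := rfl

theorem nodup_pairPaths {F : List (V × V)} (hF : (pairVerts F).Nodup) : (pairPaths F).Nodup := by
  induction F with
  | nil => simp [pairPaths]
  | cons p F ih =>
    simp only [pairVerts, List.flatMap_cons, List.cons_append, List.nil_append,
      List.nodup_cons] at hF
    refine List.nodup_cons.2 ⟨fun h => ?_, ih hF.2.2⟩
    obtain ⟨q, hq, hqp⟩ := List.mem_map.1 h
    simp only [List.cons.injEq, and_true] at hqp
    refine hF.1 (List.mem_cons_of_mem _ (List.mem_flatMap.2 ⟨q, hq, ?_⟩))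
    simp [hqp.1]

theorem nodup_flatten_of_subset_pairPaths {F : List (V × V)} (hF : (pairVerts F).Nodup)
    {Ys : List (List V)} (hYs : Ys.Nodup) (h : Ys ⊆ pairPaths F) :
    Ys.flatten.Nodup ∧ Ys.flatten ⊆ pairVerts F := by
  obtain ⟨l, hl, hlF⟩ := List.subperm_of_subset hYs h
  have hs := hlF.flatten
  rw [flatten_pairPaths] at hs
  exact ⟨hl.flatten.nodup_iff.1 (hF.sublist hs), fun x hx => hs.subset (hl.flatten.symm.subset hx)⟩

theorem le_length_filter_pairPaths {U : Finset V} {F : List (V × V)} {K : ℕ}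
    (hF : ∀ u ∈ U, ∀ w ∈ U, ∃ H : List (V × V), H.Sublist F ∧
      (∀ p ∈ H, E u p.1 ∧ E p.2 w) ∧ K ≤ H.length)
    {b b' : List V} (hb : b ≠ [] ∧ ∀ x ∈ b.getLast?, x ∈ U) (hb' : b' ≠ [] ∧ ∀ x ∈ b'.head?, x ∈ U)
    (q : List V → Bool) (hq : ∀ f, ((∀ x ∈ b.getLast?, ∀ y ∈ f.head?, E x y) ∧
      ∀ x ∈ f.getLast?, ∀ y ∈ b'.head?, E x y) → q f) :
    K ≤ ((pairPaths F).filter q).length := by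
  rw [List.getLast?_eq_some_getLast hb.1] at hb hq
  rw [List.head?_eq_some_head hb'.1] at hb' hq
  obtain ⟨H, hH, hHE, hHK⟩ := hF _ (hb.2 _ rfl) _ (hb'.2 _ rfl)
  refine hHK.trans ?_
  have hs := (hH.map fun p => [p.1, p.2]).filter q
  rw [List.filter_eq_self.2 ?_] at hs
  · simpa [pairPaths] using hs.length_le
  · intro f hf
    obtain ⟨p, hp, rfl⟩ := List.mem_map.1 hf
    exact hq _ (by simpa using hHE p hp)

end PathLink

section HamiltonCycle

variable {V : Type*} [DecidableEq V] {E : V → V → Prop}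

open Classical in
theorem card_le_of_independent (hE : ∀ x y, E x y → ¬ E y x) {U : Finset V} {d : ℕ}
    (hout : ∀ u ∈ U, U.card ≤ 2 * (U.filter fun y => E u y).card + d)
    (hin : ∀ u ∈ U, U.card ≤ 2 * (U.filter fun y => E y u).card + d)
    {I : Finset V} (hI : I ⊆ U) (h : ∀ x ∈ I, ∀ y ∈ I, x ≠ y → ¬ E x y) : I.card ≤ d := by
  rcases I.eq_empty_or_nonempty with rfl | ⟨x, hx⟩
  · simp
  have hxx : ¬ E x x := fun h => hE x x h h
  have hdis : Disjoint (U.filter fun y => E x y) (U.filter fun y => E y x) :=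
    Finset.disjoint_filter.2 fun y _ h => hE x y h
  have hsub : I ∪ ((U.filter fun y => E x y) ∪ U.filter fun y => E y x) ⊆ U :=
    Finset.union_subset hI (Finset.union_subset (Finset.filter_subset _ _)
      (Finset.filter_subset _ _))
  have hdis' : Disjoint I ((U.filter fun y => E x y) ∪ U.filter fun y => E y x) := by
    rw [Finset.disjoint_left]
    intro y hy hyE
    rw [Finset.mem_union, Finset.mem_filter, Finset.mem_filter] at hyE
    rcases eq_or_ne x y with rfl | hne
    · tauto
    · have := h x hx y hy hne
      have := h y hy x hx hne.symm
      tauto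
  have := Finset.card_le_card hsub
  rw [Finset.card_union_of_disjoint hdis', Finset.card_union_of_disjoint hdis] at this
  have h1 := hout x (hI hx)
  have h2 := hin x (hI hx)
  omega

open Classical in
/-- Edges of an almost regular near-tournament `U`, linked to one path by further ones, which can
absorb any small set of vertices of `U`. -/
theorem exists_absorbing_path (hE : ∀ x y, E x y → ¬ E y x) {U : Finset V} {d : ℕ}
    (hout : ∀ u ∈ U, U.card ≤ 2 * (U.filter fun y => E u y).card + d)
    (hin : ∀ u ∈ U, U.card ≤ 2 * (U.filter fun y => E y u).card + d)
    (hU : U.Nonempty) (hd : 200 * d ≤ U.card) (X : Finset V) (m : ℕ)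
    (hX : 500 * (X.card + 2 * (80400 * m)) ≤ U.card)
    (hm : (U.card : ℝ) ^ 2 * (995 / 1000) ^ m < 1) :
    ∃ P : List (List V), P ≠ [] ∧ (∀ b ∈ P, b ≠ [] ∧ b.IsChain E) ∧
      (P.IsChain fun a b => ∀ x ∈ a.getLast?, ∀ y ∈ b.head?, E x y) ∧
      P.flatten.Nodup ∧ P.flatten.length ≤ 2 * (80400 * m) ∧ (∀ v ∈ P.flatten, v ∈ U ∧ v ∉ X) ∧
      ∀ v ∈ U, ∃ H : Finset (V × V), 2 * m ≤ H.card ∧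
        ∀ p ∈ H, [p.1, p.2] ∈ P ∧ E p.1 v ∧ E v p.2 := by
  have hN : (1 : ℝ) ≤ U.card := by exact_mod_cast Finset.card_pos.2 hU
  have hm0 : m ≠ 0 := by
    rintro rfl
    nlinarith
  have hpow : ∀ k, m ≤ k → (U.card : ℝ) ^ 2 * (995 / 1000) ^ k < 1 := fun k hk =>
    (mul_le_mul_of_nonneg_left (pow_le_pow_of_le_one (by norm_num) (by norm_num) hk)
      (by positivity)).trans_lt hm
  obtain ⟨F, hFn, hFU, hFl, hFE, hF⟩ := exists_edge_selection (τ := V × V) hE hout hin hU hd X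
    (80000 * m) (by omega) (U ×ˢ U)
    (by rw [Finset.card_product, Nat.cast_mul, ← sq]; exact hpow _ (by omega))
    (fun t y => E t.1 y) (fun t y => E y t.2)
    (fun t ht => hout _ (Finset.mem_product.1 ht).1) (fun t ht => hin _ (Finset.mem_product.1 ht).2)
  have hFc := (List.toFinset_card_le (pairVerts F)).trans_eq (length_pairVerts F)
  have hXF := Finset.card_union_le X (pairVerts F).toFinset
  obtain ⟨F', hFn', hFU', hFl', hFE', hF'⟩ := exists_edge_selection (τ := V) hE hout hin hU hd
    (X ∪ (pairVerts F).toFinset) (400 * m) (by omega) U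
    (lt_of_le_of_lt (by gcongr; exact le_self_pow₀ hN two_ne_zero) (hpow (400 * m) (by omega)))
    (fun v y => E y v) (fun v y => E v y) hin hout
  have hF'ne : pairPaths F' ≠ [] := by
    obtain ⟨u, hu⟩ := hU
    obtain ⟨H, hH, -, hHl⟩ := hF' u hu
    have := hH.length_le
    rw [pairPaths, Ne, List.map_eq_nil_iff]
    rintro rfl
    rw [List.length_nil] at this
    omega
  have hmem : ∀ {F : List (V × V)}, ∀ b ∈ pairPaths F, ∀ x ∈ b, x ∈ pairVerts F :=
    fun b hb x hx => by rw [← flatten_pairPaths]; exact List.mem_flatten.2 ⟨b, hb, hx⟩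
  have hfl : ∀ l : List (List V), (l.map fun b => [b]).flatten = l := fun l => by
    induction l <;> simp_all
  obtain ⟨P, Ys, hP0, hPc, hYn, hYF, -, hPp, -, -⟩ := exists_link
    (fun a b : List V => ∀ x ∈ a.getLast?, ∀ y ∈ b.head?, E x y) (pairPaths F)
    (nodup_pairPaths hFn) (fun b => b ≠ [] ∧ ∀ x ∈ b, x ∈ U) (400 * m)
    (fun b b' hb hb' => le_length_filter_pairPaths (U := U) (K := 400 * m)
      (fun u hu w hw => by
        obtain ⟨H, hH, hHE, hHl⟩ := hF (u, w) (Finset.mem_product.2 ⟨hu, hw⟩)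
        exact ⟨H, hH, hHE, by omega⟩)
      ⟨hb.1, fun x hx => hb.2 x (List.mem_of_getLast? hx)⟩
      ⟨hb'.1, fun x hx => hb'.2 x (List.mem_of_head? hx)⟩ _
      (fun f hf => by simpa using hf))
    ((pairPaths F').map fun b => [b]) (by simpa using hF'ne)
    (by rw [List.length_map, pairPaths, List.length_map]; exact hFl') (by
      intro l hl
      obtain ⟨b, hb, rfl⟩ := List.mem_map.1 hl
      have : b ≠ [] ∧ ∀ x ∈ b, x ∈ U := by
        refine ⟨?_, fun x hx => (hFU' x (hmem b hb x hx)).1⟩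
        obtain ⟨p, -, rfl⟩ := List.mem_map.1 hb
        simp
      simpa using this)
  rw [hfl] at hPp
  have hpaths : ∀ {F : List (V × V)}, (∀ p ∈ F, E p.1 p.2) → ∀ b ∈ pairPaths F,
      b ≠ [] ∧ b.IsChain E := by
    intro F hF b hb
    obtain ⟨p, hp, rfl⟩ := List.mem_map.1 hb
    simpa using hF p hp
  obtain ⟨hYfn, hYfF⟩ := nodup_flatten_of_subset_pairPaths hFn hYn hYF
  have hPf : P.flatten.Perm (pairVerts F' ++ Ys.flatten) := by
    have := hPp.flatten
    rwa [List.flatten_append, flatten_pairPaths] at this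
  have hPU : ∀ v ∈ P.flatten, v ∈ U ∧ v ∉ X ∧ (v ∈ pairVerts F' ∨ v ∈ pairVerts F) := by
    intro v hv
    rcases List.mem_append.1 (hPf.subset hv) with hv | hv
    · have := hFU' v hv
      rw [Finset.mem_union] at this
      tauto
    · have := hFU v (hYfF hv)
      have := hYfF hv
      tauto
  have hPn : P.flatten.Nodup := by
    rw [hPf.nodup_iff, List.nodup_append']
    refine ⟨hFn', hYfn, fun v hv hv' => ?_⟩
    have h1 := (hFU' v hv).2
    rw [Finset.mem_union, List.mem_toFinset] at h1
    exact h1 (Or.inr (hYfF hv'))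
  refine ⟨P, hP0, ?_, hPc, hPn, ?_, fun v hv => ⟨(hPU v hv).1, (hPU v hv).2.1⟩, fun v hv => ?_⟩
  · intro b hb
    rcases List.mem_append.1 (hPp.subset hb) with hb | hb
    · exact hpaths hFE' b hb
    · exact hpaths hFE b (hYF hb)
  · have := (List.subperm_of_subset hPn (l₂ := pairVerts F' ++ pairVerts F) fun v hv =>
      List.mem_append.2 (hPU v hv).2.2).length_le
    rw [List.length_append, length_pairVerts, length_pairVerts] at this
    omega
  · obtain ⟨H, hH, hHE, hHl⟩ := hF' v hv
    have hHn : H.Nodup := by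
      have := (nodup_pairPaths hFn').sublist (hH.map fun p : V × V => [p.1, p.2])
      exact this.of_map
    refine ⟨H.toFinset, ?_, fun p hp => ?_⟩
    · rw [List.toFinset_card_of_nodup hHn]
      omega
    · rw [List.mem_toFinset] at hp
      exact ⟨hPp.symm.subset (List.mem_append_left _ (List.mem_map.2 ⟨p, hH.subset hp, rfl⟩)),
        hHE p hp⟩

end HamiltonCycle

section HamiltonCycle

variable {V : Type*} [DecidableEq V] [Fintype V] {E : V → V → Prop}

open Classical in
/-- If the complement of an almost regular near-tournament `U` is covered by few paths whose ends
have many neighbours in `U`, then there is a Hamilton cycle. -/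
theorem exists_hamilton_list (hE : ∀ x y, E x y → ¬ E y x) {U : Finset V} {d : ℕ}
    (hout : ∀ u ∈ U, U.card ≤ 2 * (U.filter fun y => E u y).card + d)
    (hin : ∀ u ∈ U, U.card ≤ 2 * (U.filter fun y => E y u).card + d)
    (hU : U.Nonempty) {c m : ℕ} {L : List (List V)}
    (hL : ∀ l ∈ L, l ≠ [] ∧ l.IsChain E ∧ (∀ x ∈ l.head?, c ≤ (U.filter fun u => E u x).card) ∧
        ∀ x ∈ l.getLast?, c ≤ (U.filter fun u => E x u).card)
    (hLf : L.flatten.Perm Uᶜ.toList) (hc : 2 * L.length ≤ c) (hm : 200 * (1 + L.length + d) ≤ m)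
    (hN : 10 ^ 9 * m ≤ U.card) (hlog : (U.card : ℝ) ^ 2 * (995 / 1000) ^ m < 1) :
    ∃ l : List V, l.Nodup ∧ (∀ v, v ∈ l) ∧ l.IsChain E ∧
      ∀ x ∈ l.getLast?, ∀ y ∈ l.head?, E x y := by
  obtain ⟨L', Ye, hYn, hYU, hYl, hL'p, hL'l, hL'⟩ := exists_extension E U c L hc
    fun l hl => ⟨(hL l hl).1, (hL l hl).2.2⟩
  have hYc := List.toFinset_card_le Ye
  obtain ⟨P, hP0, hPb, hPc, hPn, hPl, hPU, hPabs⟩ := exists_absorbing_path hE hout hin hU (by omega)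
    Ye.toFinset m (by omega) hlog
  have hPfc := List.toFinset_card_le P.flatten
  have hYP := Finset.card_union_le Ye.toFinset P.flatten.toFinset
  obtain ⟨F, hFn, hFU, hFl, hFE, hF⟩ := exists_edge_selection (τ := V × V) hE hout hin hU (by omega)
    (Ye.toFinset ∪ P.flatten.toFinset) m (by omega) (U ×ˢ U)
    (by rw [Finset.card_product, Nat.cast_mul, ← sq]; exact hlog)
    (fun t y => E t.1 y) (fun t y => E y t.2)
    (fun t ht => hout _ (Finset.mem_product.1 ht).1) (fun t ht => hin _ (Finset.mem_product.1 ht).2)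
  obtain ⟨R, hR⟩ : ∃ R : Finset V, ∀ v, v ∈ R ↔
      v ∈ U ∧ v ∉ Ye ∧ v ∉ P.flatten ∧ v ∉ pairVerts F :=
    ⟨U.filter fun v => v ∉ Ye ∧ v ∉ P.flatten ∧ v ∉ pairVerts F, by simp⟩
  obtain ⟨C, hC, hCp, hCl⟩ := exists_path_cover E R d fun I hI h =>
    card_le_of_independent hE hout hin (fun v hv => ((hR v).1 (hI hv)).1) h
  have hL'E : ∀ l ∈ L', l ≠ [] ∧ l.IsChain E ∧ (∀ x ∈ l.head?, x ∈ U) ∧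
      ∀ x ∈ l.getLast?, x ∈ U := by
    intro l' hl'
    obtain ⟨l, hl, u, u', rfl, hu, hu', h1, h2⟩ := hL' l' hl'
    have hl0 := (hL l hl).1
    refine ⟨by simp, ?_, by simpa using hu, ?_⟩
    · rw [List.isChain_cons, List.isChain_append]
      refine ⟨?_, (hL l hl).2.1, by simp, ?_⟩
      · rwa [List.head?_append_of_ne_nil _ hl0]
      · simpa using h2
    · rw [List.getLast?_cons_of_ne_nil (by simp), List.getLast?_append_of_ne_nil _ (by simp)]
      simpa using hu'
  have hCU : ∀ l ∈ C, ∀ x ∈ l, x ∈ R := fun l hl x hx =>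
    Finset.mem_toList.1 (hCp.subset (List.mem_flatten.2 ⟨l, hl, hx⟩))
  obtain ⟨B, Ys, hB0, hBc, hBcl, hYsn, hYsF, hBp⟩ := exists_cyclic_link
    (fun a b : List V => ∀ x ∈ a.getLast?, ∀ y ∈ b.head?, E x y) (pairPaths F)
    (nodup_pairPaths hFn)
    (fun b => b ≠ [] ∧ (∀ x ∈ b.head?, x ∈ U) ∧ ∀ x ∈ b.getLast?, x ∈ U) (1 + L.length + d)
    (fun b b' hb hb' => le_length_filter_pairPaths (U := U) (K := 1 + L.length + d)
      (fun u hu w hw => by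
        obtain ⟨H, hH, hHE, hHl⟩ := hF (u, w) (Finset.mem_product.2 ⟨hu, hw⟩)
        exact ⟨H, hH, hHE, by omega⟩)
      ⟨hb.1, hb.2.2⟩ ⟨hb'.1, hb'.2.1⟩ _ (fun f hf => by simpa using hf))
    (P :: ((L' ++ C).map fun b => [b])) (by simp) (by simp; omega) (by
      rw [List.forall_mem_cons]
      have hPQ : ∀ b ∈ P, b ≠ [] ∧ (∀ x ∈ b.head?, x ∈ U) ∧ ∀ x ∈ b.getLast?, x ∈ U :=
        fun b hb => ⟨(hPb b hb).1,
          fun x hx => (hPU x (List.mem_flatten.2 ⟨b, hb, List.mem_of_head? hx⟩)).1,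
          fun x hx => (hPU x (List.mem_flatten.2 ⟨b, hb, List.mem_of_getLast? hx⟩)).1⟩
      refine ⟨⟨hP0, hPc, fun x hx => hPQ x (List.mem_of_head? hx),
        fun x hx => hPQ x (List.mem_of_getLast? hx)⟩, fun l hl => ?_⟩
      obtain ⟨b, hb, rfl⟩ := List.mem_map.1 hl
      have : b ≠ [] ∧ (∀ x ∈ b.head?, x ∈ U) ∧ ∀ x ∈ b.getLast?, x ∈ U := by
        rcases List.mem_append.1 hb with hb | hb
        · exact ⟨(hL'E b hb).1, (hL'E b hb).2.2⟩
        · exact ⟨(hC b hb).1,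
            fun x hx => ((hR x).1 (hCU b hb x (List.mem_of_head? hx))).1,
            fun x hx => ((hR x).1 (hCU b hb x (List.mem_of_getLast? hx))).1⟩
      simpa using this)
  have hfl : ∀ l : List (List V), (l.map fun b => [b]).flatten = l := fun l => by
    induction l <;> simp_all
  rw [List.flatten_cons, hfl] at hBp
  have hcyc : IsCyclicPathList E B := by
    refine ⟨fun b hb => ?_, hBc, hBcl⟩
    have := hBp.subset hb
    simp only [List.mem_append] at this
    rcases this with (hb | hb | hb) | hb
    · exact hPb b hb
    · exact ⟨(hL'E b hb).1, (hL'E b hb).2.1⟩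
    · exact hC b hb
    · obtain ⟨p, hp, rfl⟩ := List.mem_map.1 (hYsF hb)
      simpa using hFE p hp
  obtain ⟨hYfn, hYfF⟩ := nodup_flatten_of_subset_pairPaths hFn hYsn hYsF
  have hBf : B.flatten.Perm (P.flatten ++ (Uᶜ.toList ++ Ye ++ R.toList) ++ Ys.flatten) := by
    have := hBp.flatten
    simp only [List.flatten_append] at this
    exact this.trans
      (((((hL'p.trans (hLf.append_right _)).append hCp).append_left _)).append_right _)
  have hmem : ∀ v, v ∉ B.flatten → v ∈ U ∧ v ∈ pairVerts F := by
    intro v hv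
    rw [hBf.mem_iff] at hv
    simp only [List.mem_append, Finset.mem_toList, Finset.mem_compl, hR] at hv
    tauto
  have hBn : B.flatten.Nodup := by
    rw [hBf.nodup_iff]
    simp only [List.nodup_append', hPn, hYn, hYfn, Finset.nodup_toList, List.disjoint_left,
      List.mem_append, Finset.mem_toList, Finset.mem_compl, hR, true_and]
    refine ⟨⟨⟨?_, ?_⟩, ?_⟩, ?_⟩
    · intro v hv hv'
      exact hv (hYU v hv')
    · intro v hv
      tauto
    · intro v hv
      have := hPU v hv
      rw [List.mem_toFinset] at this
      tauto
    · intro v hv hv'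
      have := hFU v (hYfF hv')
      have := hYfF hv'
      simp only [Finset.mem_union, List.mem_toFinset] at *
      tauto
  obtain ⟨Z, hZ⟩ : ∃ Z : Finset V, ∀ v, v ∈ Z ↔ v ∉ B.flatten :=
    ⟨Finset.univ.filter fun v => v ∉ B.flatten, by simp⟩
  have hZc : Z.card ≤ 2 * m := by
    have h1 : Z ⊆ (pairVerts F).toFinset := fun v hv => by
      rw [List.mem_toFinset]
      exact (hmem v ((hZ v).1 hv)).2
    have := Finset.card_le_card h1
    have := List.toFinset_card_le (pairVerts F)
    rw [length_pairVerts] at this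
    omega
  obtain ⟨B', hB', hB'p⟩ := IsCyclicPathList.exists_absorb Z.toList B hcyc fun v hv => by
    rw [Finset.mem_toList, hZ] at hv
    obtain ⟨H, hHc, hH⟩ := hPabs v (hmem v hv).1
    refine ⟨H, by rw [Finset.length_toList]; omega, fun p hp => ⟨?_, (hH p hp).2⟩⟩
    rw [hBp.mem_iff]
    exact List.mem_append_left _ (List.mem_append_left _ (hH p hp).1)
  refine ⟨B'.flatten, ?_, fun v => ?_, hB'.flatten.1, hB'.flatten.2⟩
  · rw [hB'p.nodup_iff, List.nodup_append']
    refine ⟨hBn, Z.nodup_toList, fun v hv hv' => ?_⟩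
    rw [Finset.mem_toList, hZ] at hv'
    exact hv' hv
  · rw [hB'p.mem_iff, List.mem_append, Finset.mem_toList, hZ]
    tauto

end HamiltonCycle

section HamiltonCycle

variable {V : Type*} [Fintype V] {E : V → V → Prop}

theorem exists_isHamCycle_of_list {l : List V} (hne : l ≠ []) (hn : l.Nodup) (hl : ∀ v, v ∈ l)
    (hc : l.IsChain E) (hclosed : ∀ x ∈ l.getLast?, ∀ y ∈ l.head?, E x y) :
    ∃ f, IsHamCycle E f := by
  classical
  have hlen : l.length = Fintype.card V := by
    rw [← List.toFinset_card_of_nodup hn, (Finset.card_eq_iff_eq_univ _).2]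
    simpa [Finset.eq_univ_iff_forall] using hl
  unfold IsHamCycle
  rw [← hlen]
  have hpos : 0 < l.length := List.length_pos_iff.2 hne
  have : NeZero l.length := ⟨hpos.ne'⟩
  refine ⟨fun i => l[i.val]'(ZMod.val_lt i), ?_, fun i => ?_⟩
  · rw [Fintype.bijective_iff_injective_and_card, ZMod.card]
    refine ⟨fun i j h => ?_, hlen⟩
    exact ZMod.val_injective _ ((hn.getElem_inj_iff).1 h)
  · have hi := ZMod.val_lt i
    have hv : (i + 1).val = (i.val + 1) % l.length := by
      conv_lhs => rw [← ZMod.natCast_zmod_val i]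
      rw [← Nat.cast_add_one, ZMod.val_natCast]
    rcases Nat.lt_or_ge (i.val + 1) l.length with h | h
    · simp only [hv, Nat.mod_eq_of_lt h]
      exact List.isChain_iff_getElem.1 hc _ h
    · have h' : i.val + 1 = l.length := by omega
      simp only [hv, h', Nat.mod_self]
      refine hclosed _ ?_ _ ?_
      · rw [List.getLast?_eq_getElem?, List.getElem?_eq_getElem (by omega)]
        simp [← h']
      · rw [List.head?_eq_getElem?, List.getElem?_eq_getElem (by omega)]
        simp

variable [DecidableEq V]

open Classical in
/-- A linear forest with few components on the complement of an almost regular near-tournament `U`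
extends to a Hamilton cycle, if its ends have many neighbours in `U`. -/
theorem exists_isHamCycle_of_forest (hE : ∀ x y, E x y → ¬ E y x) {U : Finset V} {d : ℕ}
    (hout : ∀ u ∈ U, U.card ≤ 2 * (U.filter fun y => E u y).card + d)
    (hin : ∀ u ∈ U, U.card ≤ 2 * (U.filter fun y => E y u).card + d)
    (hU : U.Nonempty) {M : V → Option V} {ρ : V → ℕ} (hρ : ∀ v w, M v = some w → ρ v < ρ w)
    (hinj : ∀ v v' w, M v = some w → M v' = some w → v = v')
    (hMU : ∀ v w, M v = some w → w ∉ U) (hME : ∀ v w, M v = some w → E v w) {κ m : ℕ}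
    (hκ : (Uᶜ.filter fun v => M v = none).card ≤ κ)
    (hend : ∀ v ∉ U, M v = none → 2 * κ ≤ (U.filter fun u => E v u).card)
    (hstart : ∀ w ∉ U, (∀ v ∉ U, M v ≠ some w) → 2 * κ ≤ (U.filter fun u => E u w).card)
    (hm : 200 * (1 + κ + d) ≤ m) (hN : 10 ^ 9 * m ≤ U.card)
    (hlog : (U.card : ℝ) ^ 2 * (995 / 1000) ^ m < 1) :
    ∃ f, IsHamCycle E f := by
  obtain ⟨L, hL, hLf, hlast, hhead, hlen⟩ := exists_forest_paths M ρ hρ hinj Uᶜ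
    fun v _ w hvw => Finset.mem_compl.2 (hMU v w hvw)
  have hmem : ∀ l ∈ L, ∀ x ∈ l, x ∉ U := fun l hl x hx => by
    have := hLf.subset (List.mem_flatten.2 ⟨l, hl, hx⟩)
    simpa using this
  have hlen' : L.length ≤ κ := by
    rw [hlen]
    convert hκ
  obtain ⟨l, hn, hl, hc, hcl⟩ := exists_hamilton_list hE hout hin hU (c := 2 * κ) (m := m) (L := L)
    (fun l hl => ⟨(hL l hl).1, (hL l hl).2.imp fun v w => hME v w,
      fun x hx => hstart x (hmem l hl x (List.mem_of_head? hx))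
        fun v hv => hhead l hl x hx v (Finset.mem_compl.2 hv),
      fun x hx => hend x (hmem l hl x (List.mem_of_getLast? hx)) (hlast l hl x hx)⟩)
    hLf (by omega) (by omega) hN hlog
  obtain ⟨u, -⟩ := hU
  exact exists_isHamCycle_of_list (List.ne_nil_of_mem (hl u)) hn hl hc hcl

end HamiltonCycle

section Partition

variable {V J ι : Type*} [Fintype V] [Fintype J] [Nonempty J] [DecidableEq V] [DecidableEq J]

theorem sum_exp_centred_le {h : ℝ} (hh : |h| ≤ 1) (j : J) :
    ∑ x : J, Real.exp (h * ((if x = j then 1 else 0) - 1 / Fintype.card J)) ≤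
      Fintype.card J * Real.exp (h ^ 2) := by
  have hg : (1 : ℝ) ≤ Fintype.card J := by exact_mod_cast Fintype.card_pos
  have hbd : ∀ x : J, |(if x = j then (1 : ℝ) else 0) - 1 / Fintype.card J| ≤ 1 := fun x => by
    have h1 : (1 : ℝ) / Fintype.card J ≤ 1 := (div_le_one (by linarith)).2 hg
    have h2 : (0 : ℝ) ≤ 1 / Fintype.card J := by positivity
    rw [abs_le]
    split_ifs <;> constructor <;> linarith
  have hterm : ∀ x : J, Real.exp (h * ((if x = j then 1 else 0) - 1 / Fintype.card J)) ≤
      1 + h * ((if x = j then 1 else 0) - 1 / Fintype.card J) + h ^ 2 := fun x => by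
    set y := (if x = j then (1 : ℝ) else 0) - 1 / Fintype.card J with hy
    have h1 : |h * y| ≤ 1 := by
      rw [abs_mul]
      exact mul_le_one₀ hh (abs_nonneg _) (hbd x)
    have h2 := (abs_le.1 (Real.abs_exp_sub_one_sub_id_le h1)).2
    have h3 : y ^ 2 ≤ 1 := by
      rw [← sq_abs]
      exact pow_le_one₀ (abs_nonneg _) (hbd x)
    nlinarith [sq_nonneg h]
  calc _ ≤ ∑ x : J, (1 + h * ((if x = j then 1 else 0) - 1 / Fintype.card J) + h ^ 2) :=
        Finset.sum_le_sum fun x _ => hterm x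
    _ = Fintype.card J * (h ^ 2 + 1) := by
      rw [Finset.sum_add_distrib, Finset.sum_add_distrib, ← Finset.mul_sum, Finset.sum_sub_distrib]
      simp only [Finset.sum_const, Finset.card_univ, nsmul_eq_mul, Finset.sum_ite_eq',
        Finset.mem_univ, if_true]
      field_simp
      ring
    _ ≤ _ := by
      gcongr
      exact Real.add_one_le_exp _

theorem sum_exp_deviation_le {h : ℝ} (hh : |h| ≤ 1) (A : Finset V) (j : J) :
    ∑ χ : V → J, Real.exp (h * ((A.filter fun v => χ v = j).card - A.card / Fintype.card J)) ≤
      (Fintype.card J * Real.exp (h ^ 2)) ^ Fintype.card V := by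
  let φ : V → J → ℝ := fun v x =>
    if v ∈ A then Real.exp (h * ((if x = j then 1 else 0) - 1 / Fintype.card J)) else 1
  have hφ : ∀ χ : V → J, Real.exp (h * ((A.filter fun v => χ v = j).card -
      A.card / Fintype.card J)) = ∏ v, φ v (χ v) := fun χ => by
    rw [Finset.prod_ite_mem, Finset.univ_inter, ← Real.exp_sum, ← Finset.mul_sum,
      Finset.sum_sub_distrib, Finset.sum_boole, Finset.sum_const, nsmul_eq_mul, mul_one_div]
  rw [Finset.sum_congr rfl fun χ _ => hφ χ, ← Fintype.piFinset_univ, ← Finset.prod_univ_sum,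
    ← Finset.card_univ (α := V), ← Finset.prod_const]
  refine Finset.prod_le_prod (fun v _ => Finset.sum_nonneg fun x _ => ?_) fun v _ => ?_
  · simp only [φ]
    split_ifs <;> positivity
  · by_cases hv : v ∈ A
    · simpa only [φ, hv, if_true] using sum_exp_centred_le hh j
    · simp only [φ, hv, if_false, Finset.sum_const, Finset.card_univ, nsmul_eq_mul]
      gcongr
      exact Real.one_le_exp (sq_nonneg h)

/-- Given few sets, there is a partition which splits each of them almost evenly. -/
theorem exists_even_partition [Fintype ι] [Nonempty ι] (A : ι → Finset V) {ε : ℝ} (hε : 0 < ε)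
    (hε1 : ε ≤ 1)
    (hn : 2 * Fintype.card ι * Fintype.card J < Real.exp (ε ^ 2 / 4 * Fintype.card V)) :
    ∃ χ : V → J, ∀ t j, |(((A t).filter fun v => χ v = j).card : ℝ) -
      (A t).card / Fintype.card J| ≤ ε * Fintype.card V := by
  by_contra! hno
  set n : ℝ := (Fintype.card V : ℝ) with hnn
  set g : ℝ := (Fintype.card J : ℝ) with hg
  let dev : (V → J) → ι → J → ℝ := fun χ t j =>
    ((A t).filter fun v => χ v = j).card - (A t).card / Fintype.card J
  have hg0 : 0 < g := Nat.cast_pos.2 Fintype.card_pos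
  have hlow : ∀ χ : V → J, Real.exp (ε ^ 2 / 2 * n) ≤ ∑ t, ∑ j,
      (Real.exp (ε / 2 * dev χ t j) + Real.exp (-(ε / 2) * dev χ t j)) := fun χ => by
    obtain ⟨t, j, h⟩ := hno χ
    refine le_trans ?_ (Finset.single_le_sum (f := fun t => ∑ j,
      (Real.exp (ε / 2 * dev χ t j) + Real.exp (-(ε / 2) * dev χ t j)))
      (fun _ _ => by positivity) (Finset.mem_univ t))
    refine le_trans ?_ (Finset.single_le_sum (f := fun j =>
      (Real.exp (ε / 2 * dev χ t j) + Real.exp (-(ε / 2) * dev χ t j)))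
      (fun _ _ => by positivity) (Finset.mem_univ j))
    rcases lt_abs.1 h with h | h
    · refine le_trans (Real.exp_le_exp.2 ?_) (le_add_of_nonneg_right (Real.exp_nonneg _))
      change ε * n < dev χ t j at h
      nlinarith
    · refine le_trans (Real.exp_le_exp.2 ?_) (le_add_of_nonneg_left (Real.exp_nonneg _))
      change ε * n < -dev χ t j at h
      nlinarith
  have hsum := Finset.sum_le_sum fun χ (_ : χ ∈ Finset.univ) => hlow χ
  rw [Finset.sum_const, Finset.card_univ, Fintype.card_fun, nsmul_eq_mul, Finset.sum_comm] at hsum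
  have hup : ∀ t : ι, ∑ χ : V → J, ∑ j,
      (Real.exp (ε / 2 * dev χ t j) + Real.exp (-(ε / 2) * dev χ t j)) ≤
      g * (2 * (g * Real.exp ((ε / 2) ^ 2)) ^ Fintype.card V) := fun t => by
    rw [Finset.sum_comm]
    refine (Finset.sum_le_card_nsmul _ _ (2 * (g * Real.exp ((ε / 2) ^ 2)) ^ Fintype.card V)
      fun j _ => ?_).trans_eq (by rw [Finset.card_univ, nsmul_eq_mul])
    rw [Finset.sum_add_distrib, two_mul]
    refine add_le_add (sum_exp_deviation_le ?_ _ _) ?_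
    · rw [abs_of_pos (by positivity)]
      linarith
    · rw [← neg_sq (ε / 2)]
      refine sum_exp_deviation_le ?_ _ _
      rw [abs_neg, abs_of_pos (by positivity)]
      linarith
  have hsum2 := hsum.trans (Finset.sum_le_card_nsmul _ _ _ fun t _ => hup t)
  rw [Finset.card_univ, nsmul_eq_mul, mul_pow, ← Real.exp_nat_mul, Nat.cast_pow] at hsum2
  have he : Real.exp (ε ^ 2 / 2 * n) = Real.exp (ε ^ 2 / 4 * n) * Real.exp (n * (ε / 2) ^ 2) := by
    rw [← Real.exp_add]
    ring_nf
  rw [he] at hsum2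
  have hpos : 0 < g ^ Fintype.card V * Real.exp (n * (ε / 2) ^ 2) := by positivity
  nlinarith

end Partition

section EdgeColouring

variable {X : Type*} [Fintype X] [DecidableEq X]

theorem exists_perm_of_regular {A : X → X → ℕ} {k : ℕ} (hk : 0 < k)
    (hrow : ∀ a, ∑ b, A a b = k) (hcol : ∀ b, ∑ a, A a b = k) :
    ∃ σ : Equiv.Perm X, ∀ a, 0 < A a (σ a) := by
  obtain ⟨f, hf, hfA⟩ := (Finset.all_card_le_biUnion_card_iff_exists_injective
    fun a => Finset.univ.filter fun b => 0 < A a b).1 fun s => by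
      refine Nat.le_of_mul_le_mul_right ?_ hk
      set T := s.biUnion fun a => Finset.univ.filter fun b => 0 < A a b with hT
      calc s.card * k = ∑ a ∈ s, ∑ b, A a b := by simp [hrow]
        _ = ∑ a ∈ s, ∑ b ∈ T, A a b := by
          refine Finset.sum_congr rfl fun a ha =>
            (Finset.sum_subset (Finset.subset_univ T) fun b _ hb => ?_).symm
          by_contra hne
          exact hb (Finset.mem_biUnion.2 ⟨a, ha, by simp [Nat.pos_of_ne_zero hne]⟩)
        _ = ∑ b ∈ T, ∑ a ∈ s, A a b := Finset.sum_comm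
        _ ≤ ∑ b ∈ T, ∑ a, A a b :=
          Finset.sum_le_sum fun b _ => Finset.sum_le_sum_of_subset (Finset.subset_univ s)
        _ = T.card * k := by simp [hcol]
  refine ⟨Equiv.ofBijective f (Finite.injective_iff_bijective.1 hf), fun a => ?_⟩
  simpa using hfA a

theorem exists_perms_of_regular : ∀ (k : ℕ) (A : X → X → ℕ), (∀ a, ∑ b, A a b = k) →
    (∀ b, ∑ a, A a b = k) →
    ∃ σ : Fin k → Equiv.Perm X, ∀ a b, 0 < A a b → ∃ i, σ i a = b := by
  intro k
  induction k with
  | zero =>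
    intro A hrow _
    refine ⟨fun _ => 1, fun a b h => absurd (hrow a) ?_⟩
    have := Finset.single_le_sum (f := fun b => A a b) (fun _ _ => Nat.zero_le _)
      (Finset.mem_univ b)
    omega
  | succ k ih =>
    intro A hrow hcol
    obtain ⟨σ, hσ⟩ := exists_perm_of_regular k.succ_pos hrow hcol
    have hle : ∀ a b, (if σ a = b then 1 else 0) ≤ A a b := fun a b => by
      split_ifs with h
      · exact h ▸ hσ a
      · exact Nat.zero_le _
    have hadd : ∀ a b, A a b - (if σ a = b then 1 else 0) + (if σ a = b then 1 else 0) = A a b :=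
      fun a b => Nat.sub_add_cancel (hle a b)
    obtain ⟨τ, hτ⟩ := ih (fun a b => A a b - if σ a = b then 1 else 0)
      (fun a => by
        have := hrow a
        rw [← Finset.sum_congr rfl fun b _ => hadd a b, Finset.sum_add_distrib] at this
        simpa using this)
      (fun b => by
        have := hcol b
        rw [← Finset.sum_congr rfl fun a _ => hadd a b, Finset.sum_add_distrib] at this
        simpa [← Equiv.eq_symm_apply] using this)
    refine ⟨Fin.cons σ τ, fun a b h => ?_⟩
    by_cases hab : σ a = b
    · exact ⟨0, hab⟩
    · obtain ⟨i, hi⟩ := hτ a b (by simpa [hab] using h)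
      exact ⟨i.succ, hi⟩

/-- König's edge colouring theorem: a bipartite graph of maximum degree at most `k` has a proper
edge colouring with `k` colours. -/
theorem exists_edge_colouring (B : X → X → Prop) [DecidableRel B] {k : ℕ}
    (hout : ∀ a, (Finset.univ.filter fun b => B a b).card ≤ k)
    (hin : ∀ b, (Finset.univ.filter fun a => B a b).card ≤ k) :
    ∃ c : X → X → ℕ, (∀ a b, B a b → c a b < k) ∧
      (∀ a b b', B a b → B a b' → c a b = c a b' → b = b') ∧
      ∀ a a' b, B a b → B a' b → c a b = c a' b → a = a' := by
  classical
  obtain ⟨σ, hσ⟩ := exists_perms_of_regular (X := X ⊕ X) k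
    (fun x y => Sum.elim
      (fun a => Sum.elim (fun b => if B a b then 1 else 0)
        (fun b => if a = b then k - (Finset.univ.filter fun b => B a b).card else 0) y)
      (fun a => Sum.elim
        (fun b => if a = b then k - (Finset.univ.filter fun c => B c b).card else 0)
        (fun b => if B b a then 1 else 0) y) x)
    (by
      rintro (a | a)
      · simpa using Nat.add_sub_cancel' (hout a)
      · simpa using Nat.sub_add_cancel (hin a))
    (by
      rintro (a | a)
      · simpa using Nat.add_sub_cancel' (hin a)
      · simpa using Nat.sub_add_cancel (hout a))
  have h : ∀ a b, B a b → ∃ i, σ i (Sum.inl a) = Sum.inl b := fun a b hab =>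
    hσ (Sum.inl a) (Sum.inl b) (by simp [hab])
  choose! i hi using fun a b => show ∃ i : ℕ, B a b → ∃ h : i < k, σ ⟨i, h⟩ (Sum.inl a) = Sum.inl b
    from by
      by_cases hab : B a b
      · obtain ⟨j, hj⟩ := h a b hab
        exact ⟨j, fun _ => ⟨j.2, hj⟩⟩
      · exact ⟨0, fun h => absurd h hab⟩
  refine ⟨i, fun a b hab => (hi a b hab).1, fun a b b' h1 h2 he => ?_, fun a a' b h1 h2 he => ?_⟩
  · obtain ⟨h1', e1⟩ := hi a b h1
    obtain ⟨h2', e2⟩ := hi a b' h2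
    simp only [he] at e1
    exact Sum.inl_injective (e1.symm.trans e2)
  · obtain ⟨h1', e1⟩ := hi a b h1
    obtain ⟨h2', e2⟩ := hi a' b h2
    simp only [he] at e1
    exact Sum.inl_injective ((σ _).injective (e1.trans e2.symm))

end EdgeColouring

section Packing

variable {V ι Λ : Type*} [Fintype V]

/-- The edges of a cyclic sequence. -/
def CycleEdge {n : ℕ} (f : ZMod n → V) (x y : V) : Prop := ∃ i, f i = x ∧ f (i + 1) = y

theorem IsHamCycle.edge {E : V → V → Prop} {f : ZMod (Fintype.card V) → V} (hf : IsHamCycle E f)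
    {x y : V} (h : CycleEdge f x y) : E x y := by
  obtain ⟨i, rfl, rfl⟩ := h
  exact hf.2 i

theorem IsHamCycle.succ_unique {E : V → V → Prop} {f : ZMod (Fintype.card V) → V}
    (hf : IsHamCycle E f) {x y y' : V} (h : CycleEdge f x y) (h' : CycleEdge f x y') : y = y' := by
  obtain ⟨i, rfl, rfl⟩ := h
  obtain ⟨j, hj, rfl⟩ := h'
  rw [hf.1.1 hj]

theorem IsHamCycle.pred_unique {E : V → V → Prop} {f : ZMod (Fintype.card V) → V}
    (hf : IsHamCycle E f) {x x' y : V} (h : CycleEdge f x y) (h' : CycleEdge f x' y) : x = x' := by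
  obtain ⟨i, rfl, rfl⟩ := h
  obtain ⟨j, rfl, hj⟩ := h'
  rw [add_right_cancel (hf.1.1 hj)]

theorem IsHamCycle.exists_succ {E : V → V → Prop} {f : ZMod (Fintype.card V) → V}
    (hf : IsHamCycle E f) (x : V) : ∃ y, CycleEdge f x y := by
  obtain ⟨i, rfl⟩ := hf.1.2 x
  exact ⟨_, i, rfl, rfl⟩

/-- `M` together with the edges of `C` starting in vertices not matched by `M`. -/
def Completion (M : V → Option V) (C : V → V → Prop) (v w : V) : Prop :=
  M v = some w ∨ (M v = none ∧ C v w)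

open Classical in
/-- Edge-disjoint matchings can be completed one after the other to edge-disjoint Hamilton cycles,
if each single one can be completed in the presence of few forbidden edges. -/
theorem exists_disjoint_completions [Fintype ι] (ℓ : ι → Λ) (M : ι → V → Option V)
    (C : Λ → V → V → Prop) (hM : ∀ j j' v w, M j v = some w → M j' v = some w → j = j')
    (hMC : ∀ j l v w, M j v = some w → ¬ C l v w)
    (hC : ∀ l l' v w, C l v w → C l' v w → l = l')
    (hex : ∀ j (F : V → V → Prop),
      (∀ v, (Finset.univ.filter fun w => F v w ∧ C (ℓ j) v w).card ≤
        (Finset.univ.filter fun j' => ℓ j' = ℓ j ∧ M j' v = none).card) →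
      (∀ w, (Finset.univ.filter fun v => F v w ∧ C (ℓ j) v w).card ≤
        (Finset.univ.filter fun j' => ℓ j' = ℓ j ∧ ∀ v, M j' v ≠ some w).card) →
      ∃ f, IsHamCycle (Completion (M j) fun v w => C (ℓ j) v w ∧ ¬ F v w) f) :
    ∃ f : ι → ZMod (Fintype.card V) → V, (∀ j, IsHamCycle (Completion (M j) (C (ℓ j))) (f j)) ∧
      ∀ j j', j ≠ j' → ∀ x y, CycleEdge (f j) x y → ¬ CycleEdge (f j') x y := by
  suffices h : ∀ S : Finset ι, ∃ f : ι → ZMod (Fintype.card V) → V,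
      (∀ j ∈ S, IsHamCycle (Completion (M j) (C (ℓ j))) (f j)) ∧
      ∀ j ∈ S, ∀ j' ∈ S, j ≠ j' → ∀ x y, CycleEdge (f j) x y → ¬ CycleEdge (f j') x y by
    obtain ⟨f, h1, h2⟩ := h Finset.univ
    exact ⟨f, fun j => h1 j (Finset.mem_univ j),
      fun j j' => h2 j (Finset.mem_univ j) j' (Finset.mem_univ j')⟩
  intro S
  induction S using Finset.induction_on with
  | empty =>
    by_cases hι : Nonempty ι
    · obtain ⟨f, -⟩ := hex hι.some (fun _ _ => False) (by simp) (by simp)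
      exact ⟨fun _ => f, by simp, by simp⟩
    · exact ⟨fun j => absurd ⟨j⟩ hι, by simp, by simp⟩
  | insert j S hj ih =>
    obtain ⟨f, hf, hdis⟩ := ih
    have hkey : ∀ j' ∈ S, ∀ v w, CycleEdge (f j') v w → C (ℓ j) v w →
        ℓ j' = ℓ j ∧ M j' v = none := by
      intro j' hj' v w he hc
      rcases (hf j' hj').edge he with h | ⟨h1, h2⟩
      · exact absurd hc (hMC _ _ _ _ h)
      · exact ⟨hC _ _ _ _ h2 hc, h1⟩
    obtain ⟨g, hg⟩ := hex j (fun v w => ∃ j' ∈ S, CycleEdge (f j') v w)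
      (fun v => by
        refine Finset.card_le_card_of_forall_subsingleton
          (fun w j' => j' ∈ S ∧ CycleEdge (f j') v w)
          (fun w hw => ?_) fun j' _ w hw w' hw' => ?_
        · simp only [Finset.mem_filter, Finset.mem_univ, true_and] at hw
          obtain ⟨⟨j', hj', he⟩, hc⟩ := hw
          exact ⟨j', Finset.mem_filter.2 ⟨Finset.mem_univ _, hkey j' hj' v w he hc⟩, hj', he⟩
        · exact (hf j' hw.2.1).succ_unique hw.2.2 hw'.2.2)
      (fun w => by
        refine Finset.card_le_card_of_forall_subsingleton
          (fun v j' => j' ∈ S ∧ CycleEdge (f j') v w)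
          (fun v hv => ?_) fun j' _ v hv v' hv' => ?_
        · simp only [Finset.mem_filter, Finset.mem_univ, true_and] at hv
          obtain ⟨⟨j', hj', he⟩, hc⟩ := hv
          refine ⟨j', Finset.mem_filter.2 ⟨Finset.mem_univ _, (hkey j' hj' v w he hc).1, ?_⟩,
            hj', he⟩
          intro v' hv'
          obtain ⟨x, hx⟩ := (hf j' hj').exists_succ v'
          have hxw : x = w := by
            rcases (hf j' hj').edge hx with h | ⟨h, -⟩
            · rw [hv'] at h
              exact (Option.some.inj h).symm
            · rw [hv'] at h
              cases h
          subst hxw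
          rw [(hf j' hj').pred_unique hx he, (hkey j' hj' v x he hc).2] at hv'
          cases hv'
        · exact (hf j' hv.2.1).pred_unique hv.2.2 hv'.2.2)
    have hnew : ∀ j' ∈ S, ∀ x y, CycleEdge g x y → ¬ CycleEdge (f j') x y := by
      intro j' hj' x y he he'
      rcases hg.edge he with h | ⟨-, -, h⟩
      · rcases (hf j' hj').edge he' with h' | ⟨-, h'⟩
        · exact hj (hM _ _ _ _ h h' ▸ hj')
        · exact hMC _ _ _ _ h h'
      · exact h ⟨j', hj', he'⟩
    have hne : ∀ j' ∈ S, j' ≠ j := fun j' hj' h => hj (h ▸ hj')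
    refine ⟨Function.update f j g, ?_, ?_⟩
    · intro j' hj'
      rcases Finset.mem_insert.1 hj' with rfl | hj'
      · rw [Function.update_self]
        exact ⟨hg.1, fun i => (hg.2 i).imp_right fun h => ⟨h.1, h.2.1⟩⟩
      · rw [Function.update_of_ne (hne j' hj')]
        exact hf j' hj'
    · intro a ha b hb hab x y
      rcases Finset.mem_insert.1 ha with rfl | ha' <;> rcases Finset.mem_insert.1 hb with rfl | hb'
      · exact absurd rfl hab
      · rw [Function.update_self, Function.update_of_ne (hne b hb')]
        exact hnew b hb' x y
      · rw [Function.update_self, Function.update_of_ne (hne a ha')]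
        exact fun h h' => hnew a ha' x y h' h
      · rw [Function.update_of_ne (hne a ha'), Function.update_of_ne (hne b hb')]
        exact hdis a ha' b hb' hab x y

end Packing

section BrokenMatchings

variable {V : Type*} [Fintype V]

theorem val_lt_val_add_one {s : ℕ} [NeZero s] {t : ZMod s} (ht : t ≠ -1) :
    t.val < (t + 1).val := by
  have h1 : t.val + 1 ≠ s := by
    intro h
    apply ht
    have h2 : ((t.val + 1 : ℕ) : ZMod s) = 0 := by rw [h]; exact ZMod.natCast_self s
    rw [Nat.cast_add, ZMod.natCast_zmod_val, Nat.cast_one] at h2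
    exact eq_neg_of_add_eq_zero_left h2
  have h2 := ZMod.val_lt t
  have h3 : t + 1 = ((t.val + 1 : ℕ) : ZMod s) := by
    rw [Nat.cast_add, ZMod.natCast_zmod_val, Nat.cast_one]
  rw [h3, ZMod.val_natCast, Nat.mod_eq_of_lt (by omega)]
  exact Nat.lt_succ_self _

open Classical in
/-- A digraph all of whose edges shift a `ZMod s`-labelling by `e ≠ 0` decomposes into matchings,
which become linear forests after deleting the edges starting in vertices labelled `e`. -/
theorem exists_acyclic_matchings {s : ℕ} [Fact s.Prime] {z : V → ZMod s} {e : ZMod s}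
    (he : e ≠ 0) {B : V → V → Prop} {W : Finset V} (hBz : ∀ v w, B v w → z w = z v + e)
    (hBW : ∀ v w, B v w → v ∈ W ∧ w ∈ W) {δ Δ : ℕ}
    (hout : ∀ v ∈ W, δ ≤ (Finset.univ.filter fun w => B v w).card ∧
      (Finset.univ.filter fun w => B v w).card ≤ Δ)
    (hin : ∀ w ∈ W, δ ≤ (Finset.univ.filter fun v => B v w).card ∧
      (Finset.univ.filter fun v => B v w).card ≤ Δ) :
    ∃ M : Fin Δ → V → Option V, (∀ k v w, M k v = some w → B v w) ∧
      (∀ k k' v w, M k v = some w → M k' v = some w → k = k') ∧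
      (∀ k v v' w, M k v = some w → M k v' = some w → v = v') ∧
      (∀ k, ∃ ρ : V → ℕ, ∀ v w, M k v = some w → ρ v < ρ w) ∧
      (∀ v ∈ W, z v ≠ e → (Finset.univ.filter fun k => M k v = none).card ≤ Δ - δ) ∧
      ∀ w ∈ W, z w ≠ e + e → (Finset.univ.filter fun k => ∀ v, M k v ≠ some w).card ≤ Δ - δ := by
  have hzero : ∀ v, v ∉ W → (Finset.univ.filter fun w => B v w).card ≤ Δ := fun v hv => by
    rw [Finset.filter_false_of_mem fun w _ h => hv (hBW v w h).1]
    simp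
  have hzero' : ∀ w, w ∉ W → (Finset.univ.filter fun v => B v w).card ≤ Δ := fun w hw => by
    rw [Finset.filter_false_of_mem fun v _ h => hw (hBW v w h).2]
    simp
  obtain ⟨c, hcΔ, hc1, hc2⟩ := exists_edge_colouring B (k := Δ)
    (fun v => if hv : v ∈ W then (hout v hv).2 else hzero v hv)
    (fun v => if hv : v ∈ W then (hin v hv).2 else hzero' v hv)
  let P : Fin Δ → V → V → Prop := fun k v w => B v w ∧ c v w = k ∧ z v ≠ e
  let M : Fin Δ → V → Option V := fun k v => if h : ∃ w, P k v w then some h.choose else none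
  have hM : ∀ k v w, M k v = some w ↔ P k v w := by
    intro k v w
    simp only [M]
    split_ifs with h
    · rw [Option.some_inj]
      refine ⟨fun h' => h' ▸ h.choose_spec, fun h' => hc1 v _ _ h.choose_spec.1 h'.1 ?_⟩
      rw [h.choose_spec.2.1, h'.2.1]
    · exact ⟨fun h' => by simp at h', fun h' => absurd ⟨w, h'⟩ h⟩
  have hcount : ∀ (S : Finset V) (φ : V → ℕ) (T : Finset (Fin Δ)), (∀ w ∈ S, φ w < Δ) →
      (∀ w ∈ S, ∀ w' ∈ S, φ w = φ w' → w = w') → (∀ w ∈ S, ∀ k ∈ T, φ w ≠ k) → δ ≤ S.card →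
      T.card ≤ Δ - δ := by
    intro S φ T h1 h2 h3 h4
    have h5 : Disjoint (S.image φ) (T.image Fin.val) := by
      rw [Finset.disjoint_left]
      intro a ha ha'
      obtain ⟨w, hw, rfl⟩ := Finset.mem_image.1 ha
      obtain ⟨k, hk, hkw⟩ := Finset.mem_image.1 ha'
      exact h3 w hw k hk hkw.symm
    have h6 : S.image φ ∪ T.image Fin.val ⊆ Finset.range Δ := by
      intro a ha
      rw [Finset.mem_range]
      rcases Finset.mem_union.1 ha with ha | ha
      · obtain ⟨w, hw, rfl⟩ := Finset.mem_image.1 ha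
        exact h1 w hw
      · obtain ⟨k, -, rfl⟩ := Finset.mem_image.1 ha
        exact k.2
    have h7 := Finset.card_le_card h6
    rw [Finset.card_union_of_disjoint h5, Finset.card_range,
      Finset.card_image_of_injOn fun w hw w' hw' => h2 w hw w' hw',
      Finset.card_image_of_injective _ Fin.val_injective] at h7
    omega
  refine ⟨M, fun k v w h => ((hM k v w).1 h).1, fun k k' v w h h' => ?_, fun k v v' w h h' => ?_,
    fun k => ?_, fun v hv hz => ?_, fun w hw hz => ?_⟩
  · exact Fin.ext (((hM k v w).1 h).2.1.symm.trans ((hM k' v w).1 h').2.1)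
  · rw [hM] at h h'
    exact hc2 v v' w h.1 h'.1 (h.2.1.trans h'.2.1.symm)
  · refine ⟨fun v => ((z v - (e + e)) * e⁻¹).val, fun v w h => ?_⟩
    rw [hM] at h
    have h1 : (z w - (e + e)) * e⁻¹ = (z v - (e + e)) * e⁻¹ + 1 := by
      rw [hBz v w h.1]
      field_simp
      ring
    simp only [h1]
    refine val_lt_val_add_one fun h2 => h.2.2 ?_
    rw [← div_eq_mul_inv, div_eq_iff he] at h2
    linear_combination h2
  · refine hcount (Finset.univ.filter fun w => B v w) (c v) _ (fun w hw => ?_)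
      (fun w hw w' hw' => ?_) (fun w hw k hk h => ?_) (hout v hv).1
    · exact hcΔ v w (by simpa using hw)
    · exact hc1 v w w' (by simpa using hw) (by simpa using hw')
    · have h1 := (hM k v w).2 ⟨by simpa using hw, h, hz⟩
      simp [h1] at hk
  · refine hcount (Finset.univ.filter fun v => B v w) (fun v => c v w) _ (fun v hv => ?_)
      (fun v hv v' hv' => ?_) (fun v hv k hk h => ?_) (hin w hw).1
    · exact hcΔ v w (by simpa using hv)
    · exact hc2 v v' w (by simpa using hv) (by simpa using hv')
    · have hB : B v w := by simpa using hv
      have h1 := (hM k v w).2 ⟨hB, h, fun h2 => hz (by rw [hBz v w hB, h2])⟩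
      simp only [Finset.mem_filter, Finset.mem_univ, true_and] at hk
      exact hk v h1

open Classical in
/-- If every element of `W` is bad for few indices, most indices have few bad elements. -/
theorem card_le_card_good_add {α : Type*} {Δ D s : ℕ} {W : Finset α} (P : Fin Δ → α → Prop)
    {n : ℕ} (hn : 0 < n) (hW : W.card ≤ n)
    (hP : ∀ v ∈ W, (Finset.univ.filter fun k => P k v).card ≤ D) :
    Δ ≤ (Finset.univ.filter fun k => s * (W.filter fun v => P k v).card ≤ n).card + s * D := by
  have h1 : ∑ k, (W.filter fun v => P k v).card ≤ n * D := by
    simp only [Finset.card_filter]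
    rw [Finset.sum_comm]
    calc ∑ v ∈ W, ∑ k, (if P k v then 1 else 0) ≤ ∑ v ∈ W, D :=
          Finset.sum_le_sum fun v hv => by rw [← Finset.card_filter]; exact hP v hv
      _ ≤ n * D := by rw [Finset.sum_const, smul_eq_mul]; exact Nat.mul_le_mul_right _ hW
  have h2 : (Finset.univ.filter fun k => ¬ s * (W.filter fun v => P k v).card ≤ n).card * n ≤
      s * (n * D) := by
    refine le_trans ?_ (Nat.mul_le_mul_left s h1)
    rw [Finset.mul_sum]
    refine le_trans ?_ (Finset.sum_le_sum_of_subset (Finset.subset_univ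
      (Finset.univ.filter fun k => ¬ s * (W.filter fun v => P k v).card ≤ n)))
    rw [← smul_eq_mul]
    refine Finset.card_nsmul_le_sum _ _ _ fun k hk => ?_
    simp only [Finset.mem_filter, Finset.mem_univ, true_and] at hk
    exact (not_le.1 hk).le
  have h3 := Finset.card_filter_add_card_filter_not (s := (Finset.univ : Finset (Fin Δ)))
    fun k => s * (W.filter fun v => P k v).card ≤ n
  rw [Finset.card_univ, Fintype.card_fin] at h3
  have h4 : (Finset.univ.filter fun k => ¬ s * (W.filter fun v => P k v).card ≤ n).card ≤
      s * D := by
    refine Nat.le_of_mul_le_mul_right (h2.trans (le_of_eq ?_)) hn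
    ring
  omega

end BrokenMatchings

section GroupedPacking

variable {V Λ : Type*} [Fintype V] [Fintype Λ]

open Classical in
/-- One step of the packing: an acyclic matching outside `U` is completed to a Hamilton cycle
in the connecting digraph `C`, avoiding forbidden edges `F`. -/
theorem exists_isHamCycle_completion {G : V → V → Prop} (hG : ∀ x y, G x y → ¬ G y x)
    {U : Finset V} {C F : V → V → Prop} (hCG : ∀ v w, C v w → G v w) {M : V → Option V} {ρ : V → ℕ}
    (hMG : ∀ v w, M v = some w → G v w)
    (hρ : ∀ v w, M v = some w → ρ v < ρ w)
    (hinj : ∀ v v' w, M v = some w → M v' = some w → v = v')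
    (hMU : ∀ v w, M v = some w → v ∉ U ∧ w ∉ U) {κ d P T m : ℕ}
    (hCout : ∀ u ∈ U, U.card ≤ 2 * (U.filter fun y => C u y).card + d)
    (hCin : ∀ u ∈ U, U.card ≤ 2 * (U.filter fun y => C y u).card + d)
    (hκ : (Uᶜ.filter fun v => M v = none).card ≤ κ)
    (hend : ∀ v ∉ U, 2 * κ + P ≤ (U.filter fun u => C v u).card)
    (hstart : ∀ w ∉ U, 2 * κ + P ≤ (U.filter fun u => C u w).card)
    (hFout : ∀ v ∈ U, (Finset.univ.filter fun w => F v w ∧ C v w).card ≤ T)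
    (hFin : ∀ w ∈ U, (Finset.univ.filter fun v => F v w ∧ C v w).card ≤ T)
    (hFend : ∀ v ∉ U, M v = none → (Finset.univ.filter fun w => F v w ∧ C v w).card ≤ P)
    (hFstart : ∀ w ∉ U, (∀ v, M v ≠ some w) →
      (Finset.univ.filter fun v => F v w ∧ C v w).card ≤ P)
    (hm : 200 * (1 + κ + (d + 2 * T)) ≤ m) (hN : 10 ^ 9 * m ≤ U.card)
    (hlog : (U.card : ℝ) ^ 2 * (995 / 1000) ^ m < 1) :
    ∃ f, IsHamCycle (Completion M fun v w => C v w ∧ ¬ F v w) f := by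
  have hMnone : ∀ v ∈ U, M v = none := fun v hv => by
    cases h : M v with
    | none => rfl
    | some w => exact absurd hv (hMU v w h).1
  have hsplit : ∀ (c : V → Prop) (f E : V → Prop) (a : ℕ), (∀ y ∈ U, c y → ¬ f y → E y) →
      (Finset.univ.filter fun y => f y ∧ c y).card ≤ a →
      (U.filter fun y => c y).card ≤ (U.filter fun y => E y).card + a := by
    intro c f E a h1 h2
    refine le_trans (le_trans (Finset.card_le_card fun y hy => ?_)
      (Finset.card_union_le (U.filter fun y => E y) (Finset.univ.filter fun y => f y ∧ c y)))
      (Nat.add_le_add_left h2 _)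
    simp only [Finset.mem_filter, Finset.mem_union, Finset.mem_univ, true_and] at hy ⊢
    by_cases h3 : f y
    · exact Or.inr ⟨h3, hy.2⟩
    · exact Or.inl ⟨hy.1, h1 y hy.1 hy.2 h3⟩
  have hEG : ∀ x y, Completion M (fun v w => C v w ∧ ¬ F v w) x y → G x y := by
    rintro x y (h | ⟨-, h, -⟩)
    · exact hMG _ _ h
    · exact hCG _ _ h
  refine exists_isHamCycle_of_forest (fun x y h h' => hG x y (hEG x y h) (hEG y x h'))
    (U := U) (d := d + 2 * T) (fun u hu => ?_) (fun u hu => ?_) (Finset.card_pos.1 (by omega))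
    hρ hinj (fun v w h => (hMU v w h).2) (fun v w h => Or.inl h) hκ (fun v hv h => ?_)
    (fun w hw h => ?_) hm hN hlog
  · have h1 := hsplit (C u) (F u) (Completion M (fun v w => C v w ∧ ¬ F v w) u) T
      (fun y _ hc hf => Or.inr ⟨hMnone u hu, hc, hf⟩) (hFout u hu)
    have h2 := hCout u hu
    omega
  · have h1 := hsplit (fun y => C y u) (fun y => F y u)
      (fun y => Completion M (fun v w => C v w ∧ ¬ F v w) y u) T
      (fun y hy hc hf => Or.inr ⟨hMnone y hy, hc, hf⟩) (hFin u hu)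
    have h2 := hCin u hu
    omega
  · have h1 := hsplit (C v) (F v) (Completion M (fun v w => C v w ∧ ¬ F v w) v) P
      (fun y _ hc hf => Or.inr ⟨h, hc, hf⟩) (hFend v hv h)
    have h2 := hend v hv
    omega
  · have h1 := hsplit (fun y => C y w) (fun y => F y w)
      (fun y => Completion M (fun v w => C v w ∧ ¬ F v w) y w) P
      (fun y hy hc hf => Or.inr ⟨hMnone y hy, hc, hf⟩)
      (hFstart w hw fun v hv => h v (hMU v w hv).1 hv)
    have h2 := hstart w hw
    omega

open Classical in
/-- Suppose the edges of an oriented graph contain disjoint families of almost regular digraphs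
`B l` off the sets `U l` and of connecting digraphs `C l`. Then most of the edges of the `B l`
which change the label `z` can be covered by edge-disjoint Hamilton cycles. -/
theorem exists_disjoint_isHamCycle {G : V → V → Prop} (hG : ∀ x y, G x y → ¬ G y x)
    {s : ℕ} [Fact s.Prime] (hs : s ≠ 2) (z : V → ZMod s) (U : Λ → Finset V)
    {B C : Λ → V → V → Prop} (hBG : ∀ l v w, B l v w → G v w) (hCG : ∀ l v w, C l v w → G v w)
    (hBU : ∀ l v w, B l v w → v ∉ U l ∧ w ∉ U l)
    (hBB : ∀ l l' v w, B l v w → B l' v w → l = l')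
    (hCC : ∀ l l' v w, C l v w → C l' v w → l = l')
    (hBC : ∀ l l' v w, B l v w → ¬ C l' v w) {δ Δ d κ m : ℕ}
    (hout : ∀ l, ∀ e ≠ 0, ∀ v ∉ U l,
      δ ≤ (Finset.univ.filter fun w => B l v w ∧ z w = z v + e).card ∧
      (Finset.univ.filter fun w => B l v w ∧ z w = z v + e).card ≤ Δ)
    (hin : ∀ l, ∀ e ≠ 0, ∀ w ∉ U l,
      δ ≤ (Finset.univ.filter fun v => B l v w ∧ z w = z v + e).card ∧
      (Finset.univ.filter fun v => B l v w ∧ z w = z v + e).card ≤ Δ)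
    (hz : ∀ e, s * (Finset.univ.filter fun v => z v = e).card ≤ 2 * Fintype.card V)
    (hκ : 3 * Fintype.card V ≤ s * κ)
    (hCout : ∀ l, ∀ u ∈ U l, (U l).card ≤ 2 * ((U l).filter fun y => C l u y).card + d)
    (hCin : ∀ l, ∀ u ∈ U l, (U l).card ≤ 2 * ((U l).filter fun y => C l y u).card + d)
    (hend : ∀ l, ∀ v ∉ U l,
      2 * κ + (Δ + s * (Δ - δ)) ≤ ((U l).filter fun u => C l v u).card)
    (hstart : ∀ l, ∀ w ∉ U l,
      2 * κ + (Δ + s * (Δ - δ)) ≤ ((U l).filter fun u => C l u w).card)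
    (hm : 200 * (1 + κ + (d + 2 * (s * Δ))) ≤ m) (hN : ∀ l, 10 ^ 9 * m ≤ (U l).card)
    (hlog : ∀ l, ((U l).card : ℝ) ^ 2 * (995 / 1000) ^ m < 1) :
    ∃ (N : ℕ) (f : Fin N → ZMod (Fintype.card V) → V),
      Fintype.card Λ * ((s - 1) * (Δ - s * (Δ - δ))) ≤ N ∧
      (∀ j, IsHamCycle G (f j)) ∧
      ∀ j j', j ≠ j' → ∀ x y, CycleEdge (f j) x y → ¬ CycleEdge (f j') x y := by
  have hs0 : 0 < s := (Fact.out : s.Prime).pos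
  have h2 : (2 : ZMod s) ≠ 0 := by
    intro h
    have h3 : ((2 : ℕ) : ZMod s) = 0 := by exact_mod_cast h
    rw [ZMod.natCast_eq_zero_iff] at h3
    exact hs ((Nat.prime_dvd_prime_iff_eq Fact.out Nat.prime_two).1 h3)
  have hmat : ∀ l (e : {e : ZMod s // e ≠ 0}), ∃ M : Fin Δ → V → Option V,
      (∀ k v w, M k v = some w → B l v w ∧ z w = z v + e) ∧
      (∀ k k' v w, M k v = some w → M k' v = some w → k = k') ∧
      (∀ k v v' w, M k v = some w → M k v' = some w → v = v') ∧
      (∀ k, ∃ ρ : V → ℕ, ∀ v w, M k v = some w → ρ v < ρ w) ∧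
      (∀ v ∈ (U l)ᶜ, z v ≠ e → (Finset.univ.filter fun k => M k v = none).card ≤ Δ - δ) ∧
      ∀ w ∈ (U l)ᶜ, z w ≠ e + e →
        (Finset.univ.filter fun k => ∀ v, M k v ≠ some w).card ≤ Δ - δ := by
    intro l e
    exact exists_acyclic_matchings e.2 (fun v w h => h.2)
      (fun v w h => by simpa using hBU l v w h.1)
      (fun v hv => by convert hout l e e.2 v (Finset.mem_compl.1 hv))
      (fun v hv => by convert hin l e e.2 v (Finset.mem_compl.1 hv))
  choose M hMB hMk hMinj hMρ hMnone hMstart using hmat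
  choose ρ hρ using hMρ
  let Good : Λ × {e : ZMod s // e ≠ 0} × Fin Δ → Prop := fun j =>
    s * (((U j.1)ᶜ.filter fun v => z v ≠ j.2.1).filter fun v => M j.1 j.2.1 j.2.2 v = none).card ≤
      Fintype.card V
  let ι := {j // Good j}
  have hcount : ∀ (l : Λ) (Q : {e : ZMod s // e ≠ 0} → Fin Δ → Prop) (A : Finset ι),
      (∀ j ∈ A, j.1.1 = l ∧ Q j.1.2.1 j.1.2.2) →
      A.card ≤ ∑ e, (Finset.univ.filter fun k => Q e k).card := by
    intro l Q A hA
    rw [← Finset.card_sigma]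
    refine Finset.card_le_card_of_injOn (fun j => ⟨j.1.2.1, j.1.2.2⟩) (fun j hj => ?_) ?_
    · simpa using (hA j hj).2
    · intro j hj j' hj' h
      simp only [Sigma.mk.injEq] at h
      refine Subtype.ext (Prod.ext ((hA j hj).1.trans (hA j' hj').1.symm) (Prod.ext h.1 ?_))
      exact eq_of_heq h.2
  have hcardE : Fintype.card {e : ZMod s // e ≠ 0} = s - 1 := by
    rw [Fintype.card_subtype_compl, Fintype.card_subtype_eq, ZMod.card]
  have hT : ∀ (l : Λ) (A : Finset ι), (∀ j ∈ A, j.1.1 = l) → A.card ≤ s * Δ := by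
    intro l A hA
    refine (hcount l (fun _ _ => True) A fun j hj => ⟨hA j hj, trivial⟩).trans ?_
    simp only [Finset.filter_true, Finset.card_univ, Fintype.card_fin, Finset.sum_const,
      smul_eq_mul, hcardE]
    exact Nat.mul_le_mul_right _ (Nat.sub_le _ _)
  have hP : ∀ (φ : {e : ZMod s // e ≠ 0} → ℕ) (p : {e : ZMod s // e ≠ 0} → Prop),
      (∀ e, φ e ≤ Δ) → (∀ e, ¬ p e → φ e ≤ Δ - δ) → (∀ e e', p e → p e' → e = e') →
      ∑ e, φ e ≤ Δ + s * (Δ - δ) := by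
    intro φ p h1 h2 h3
    calc ∑ e, φ e ≤ ∑ e, ((if p e then Δ else 0) + (Δ - δ)) := by
          refine Finset.sum_le_sum fun e _ => ?_
          split_ifs with h
          · exact (h1 e).trans (Nat.le_add_right _ _)
          · exact (h2 e h).trans (Nat.le_add_left _ _)
      _ ≤ Δ + s * (Δ - δ) := by
          rw [Finset.sum_add_distrib, Finset.sum_const, Finset.card_univ, hcardE, smul_eq_mul,
            ← Finset.sum_filter, Finset.sum_const, smul_eq_mul]
          refine Nat.add_le_add ?_ (Nat.mul_le_mul_right _ (Nat.sub_le _ _))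
          refine (Nat.mul_le_mul_right Δ (Finset.card_le_one.2 fun e he e' he' => ?_)).trans
            (one_mul Δ).le
          exact h3 e e' (by simpa using he) (by simpa using he')
  have hle : ∀ A : Finset (Fin Δ), A.card ≤ Δ := fun A => by simpa using A.card_le_univ
  have hMM : ∀ (j j' : ι) (v w : V), M j.1.1 j.1.2.1 j.1.2.2 v = some w →
      M j'.1.1 j'.1.2.1 j'.1.2.2 v = some w → j = j' := by
    rintro ⟨⟨l, e, k⟩, hj⟩ ⟨⟨l', e', k'⟩, hj'⟩ v w h h'
    have h1 := hMB _ _ _ _ _ h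
    have h1' := hMB _ _ _ _ _ h'
    obtain rfl : l = l' := hBB _ _ _ _ h1.1 h1'.1
    obtain rfl : e = e' := Subtype.ext (add_left_cancel (h1.2.symm.trans h1'.2))
    obtain rfl : k = k' := hMk _ _ _ _ _ _ h h'
    rfl
  have hpack : ∃ f : ι → ZMod (Fintype.card V) → V,
      (∀ j, IsHamCycle (Completion (M j.1.1 j.1.2.1 j.1.2.2) (C j.1.1)) (f j)) ∧
      ∀ j j', j ≠ j' → ∀ x y, CycleEdge (f j) x y → ¬ CycleEdge (f j') x y := by
    refine exists_disjoint_completions (fun j : ι => j.1.1) (fun j => M j.1.1 j.1.2.1 j.1.2.2) C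
      hMM (fun j l v w h => hBC _ _ _ _ (hMB _ _ _ _ _ h).1) hCC ?_
    rintro ⟨⟨l, e, k⟩, hj⟩ F hF1 hF2
    simp only at hF1 hF2 ⊢
    refine exists_isHamCycle_completion (κ := κ) (d := d) (P := Δ + s * (Δ - δ)) (T := s * Δ)
      hG (hCG l) (fun v w h => hBG _ _ _ (hMB l e k v w h).1) (hρ l e k) (hMinj l e k)
      (fun v w h => hBU l v w (hMB l e k v w h).1) (hCout l) (hCin l) ?_ (hend l) (hstart l)
      (fun v hv => (hF1 v).trans ?_) (fun w hw => (hF2 w).trans ?_)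
      (fun v hv _ => (hF1 v).trans ?_) (fun w hw _ => (hF2 w).trans ?_) hm (hN l) (hlog l)
    · have h3 : ((U l)ᶜ.filter fun v => M l e k v = none).card ≤
          (((U l)ᶜ.filter fun v => z v ≠ e).filter fun v => M l e k v = none).card +
          (Finset.univ.filter fun v => z v = e).card := by
        refine (Finset.card_le_card fun v hv => ?_).trans (Finset.card_union_le _ _)
        simp only [Finset.mem_filter, Finset.mem_union, Finset.mem_univ, true_and] at hv ⊢
        tauto
      have h4 := hz e
      have h5 : s * (((U l)ᶜ.filter fun v => z v ≠ e).filter fun v => M l e k v = none).card ≤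
        Fintype.card V := hj
      refine Nat.le_of_mul_le_mul_left ((Nat.mul_le_mul_left s h3).trans ?_) hs0
      rw [mul_add]
      omega
    · exact hT l _ fun j hj => (Finset.mem_filter.1 hj).2.1
    · exact hT l _ fun j hj => (Finset.mem_filter.1 hj).2.1
    · refine (hcount l (fun e k => M l e k v = none) _ fun j hj => ?_).trans
        (hP _ (fun e => z v = e) (fun e => hle _)
          (fun e he => by convert hMnone l e v (Finset.mem_compl.2 hv) he)
          fun e e' h h' => Subtype.ext (h.symm.trans h'))
      obtain ⟨⟨⟨l', e', k'⟩, hj'⟩, rfl⟩ : ∃ j', j' = j := ⟨j, rfl⟩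
      simp only [Finset.mem_filter, Finset.mem_univ, true_and] at hj
      obtain ⟨rfl, hj1⟩ := hj
      exact ⟨rfl, hj1⟩
    · refine (hcount l (fun e k => ∀ v, M l e k v ≠ some w) _ fun j hj => ?_).trans
        (hP _ (fun e => z w = e + e) (fun e => hle _)
          (fun e he => by convert hMstart l e w (Finset.mem_compl.2 hw) he)
          fun e e' h h' => Subtype.ext (mul_left_cancel₀ h2 ?_))
      · obtain ⟨⟨⟨l', e', k'⟩, hj'⟩, rfl⟩ : ∃ j', j' = j := ⟨j, rfl⟩
        simp only [Finset.mem_filter, Finset.mem_univ, true_and] at hj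
        obtain ⟨rfl, hj1⟩ := hj
        exact ⟨rfl, hj1⟩
      · rw [two_mul, two_mul, ← h, h']
  obtain ⟨f, hf, hdis⟩ := hpack
  refine ⟨Fintype.card ι, fun i => f ((Fintype.equivFin ι).symm i), ?_, fun i => ?_,
    fun i i' hi => hdis _ _ fun h => hi ((Fintype.equivFin ι).symm.injective h)⟩
  · by_cases hV : 0 < Fintype.card V
    · have h3 : ∀ l e, Δ - s * (Δ - δ) ≤
          (Finset.univ.filter fun k => Good (l, e, k)).card := by
        intro l e
        have := card_le_card_good_add (s := s) (D := Δ - δ) (fun k v => M l e k v = none) hV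
          (W := (U l)ᶜ.filter fun v => z v ≠ e) (Finset.card_le_univ _)
          fun v hv => by
            convert hMnone l e v (Finset.mem_filter.1 hv).1 (Finset.mem_filter.1 hv).2
        refine Nat.sub_le_iff_le_add.2 (this.trans (le_of_eq ?_))
        congr!
      rw [Fintype.card_subtype, Finset.card_filter, Fintype.sum_prod_type]
      rw [← smul_eq_mul, ← Finset.card_univ, ← Finset.sum_const]
      refine Finset.sum_le_sum fun l _ => ?_
      rw [Fintype.sum_prod_type, ← hcardE, ← smul_eq_mul, ← Finset.card_univ,
        ← Finset.sum_const]
      refine Finset.sum_le_sum fun e _ => ?_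
      rw [← Finset.card_filter]
      exact h3 l e
    · have hι : ∀ l : Λ, False := fun l => by
        have h4 := hN l
        have h5 := (U l).card_le_univ
        omega
      have : IsEmpty Λ := ⟨hι⟩
      simp
  · refine ⟨(hf _).1, fun a => ?_⟩
    rcases (hf _).2 a with h | ⟨-, h⟩
    · exact hBG _ _ _ (hMB _ _ _ _ _ h).1
    · exact hCG _ _ _ h

end GroupedPacking

section Cells

theorem prod_eq_mul_pow {K : Type*} [Fintype K] [DecidableEq K] {f : K → ℕ} {a : ℕ} (k₀ : K)
    (h : ∀ k, k ≠ k₀ → f k = a) : ∏ k, f k = f k₀ * a ^ (Fintype.card K - 1) := by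
  rw [Fintype.prod_eq_mul_prod_compl k₀, Finset.prod_congr rfl fun k hk => h k (by simpa using hk),
    Finset.prod_const, Finset.card_compl, Finset.card_singleton]

theorem prod_eq_mul_mul_pow {K : Type*} [Fintype K] [DecidableEq K] {f : K → ℕ} {a : ℕ}
    {k₀ k₁ : K} (hk : k₀ ≠ k₁) (h : ∀ k, k ≠ k₀ → k ≠ k₁ → f k = a) :
    ∏ k, f k = f k₀ * f k₁ * a ^ (Fintype.card K - 2) := by
  rw [← Finset.prod_mul_prod_compl {k₀, k₁}, Finset.prod_pair hk,
    Finset.prod_congr rfl fun k hk => ?_, Finset.prod_const, Finset.card_compl,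
    Finset.card_pair hk]
  simp only [Finset.mem_compl, Finset.mem_insert, Finset.mem_singleton, not_or] at hk
  exact h k hk.1 hk.2

/-- A cell of the partition: coordinates determining the use of an edge by agreement,
a group label and a level. -/
abbrev Cell (r q s : ℕ) := (Fin 3 × ZMod r → ZMod q) × (ZMod r × ZMod q) × ZMod s

variable {r q s : ℕ}

/-- Edges between cells `a` and `b` with this property connect the group `l`. -/
def CellLinked (l : ZMod r × ZMod q) (a b : Cell r q s) : Prop :=
  (a.1 (0, l.1) = l.2 ∧ b.1 (0, l.1) = l.2 ∧ ∀ k, a.1 k = b.1 k ↔ k = (0, l.1)) ∨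
  (a.1 (0, l.1) ≠ l.2 ∧ b.1 (0, l.1) = l.2 ∧ ∀ k, a.1 k = b.1 k ↔ k = (1, l.1)) ∨
  (a.1 (0, l.1) = l.2 ∧ b.1 (0, l.1) ≠ l.2 ∧ ∀ k, a.1 k = b.1 k ↔ k = (2, l.1))

/-- Edges between cells `a` and `b` with this property are covered by the cycles of group `l`. -/
def CellFree (l : ZMod r × ZMod q) (a b : Cell r q s) : Prop :=
  a.1 (0, l.1) ≠ l.2 ∧ b.1 (0, l.1) ≠ l.2 ∧ (∀ k, a.1 k ≠ b.1 k) ∧ a.2.1 + b.2.1 = l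

theorem CellLinked.not_free {l l' : ZMod r × ZMod q} {a b : Cell r q s} (h : CellLinked l a b) :
    ¬ CellFree l' a b := by
  rintro ⟨-, -, h', -⟩
  rcases h with h | h | h <;> exact h' _ ((h.2.2 _).2 rfl)

theorem CellLinked.unique {l l' : ZMod r × ZMod q} {a b : Cell r q s} (h : CellLinked l a b)
    (h' : CellLinked l' a b) : l = l' := by
  obtain ⟨i, c⟩ := l
  obtain ⟨i', c'⟩ := l'
  rcases h with ⟨h1, h2, h3⟩ | ⟨h1, h2, h3⟩ | ⟨h1, h2, h3⟩ <;>
  rcases h' with ⟨h1', h2', h3'⟩ | ⟨h1', h2', h3'⟩ | ⟨h1', h2', h3'⟩ <;>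
  have h4 := (h3' _).1 ((h3 _).2 rfl) <;> simp only [Prod.mk.injEq] at h4 <;>
  first
  | (exfalso; revert h4; simp; done)
  | (obtain ⟨-, rfl⟩ := h4
     simp_all)

variable [NeZero r] [NeZero q] [NeZero s]

theorem card_filter_cell (T : Fin 3 × ZMod r → Finset (ZMod q))
    (S : Finset ((ZMod r × ZMod q) × ZMod s)) (P : Cell r q s → Prop) [DecidablePred P]
    (hP : ∀ b, P b ↔ (∀ k, b.1 k ∈ T k) ∧ b.2 ∈ S) :
    (Finset.univ.filter P).card = (∏ k, (T k).card) * S.card := by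
  rw [← Fintype.card_piFinset, ← Finset.card_product]
  congr 1
  ext b
  simp [hP]

theorem card_coordinates : Fintype.card (Fin 3 × ZMod r) = 3 * r := by
  rw [Fintype.card_prod, Fintype.card_fin, ZMod.card]

theorem card_labels : (Finset.univ : Finset ((ZMod r × ZMod q) × ZMod s)).card = r * q * s := by
  simp [ZMod.card]

theorem card_cell : Fintype.card (Cell r q s) = q ^ (3 * r) * (r * q * s) := by
  simp [ZMod.card]

theorem card_cell_level (e : ZMod s) (P : Cell r q s → Prop) [DecidablePred P]
    (hP : ∀ b, P b ↔ b.2.2 = e) : (Finset.univ.filter P).card = q ^ (3 * r) * (r * q) := by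
  rw [card_filter_cell (fun _ => Finset.univ) (Finset.univ ×ˢ {e}) P fun b => by
    rw [hP, Finset.mem_product]
    simp]
  simp [ZMod.card]

theorem card_cell_coordinate (k₀ : Fin 3 × ZMod r) (c : ZMod q) (P : Cell r q s → Prop)
    [DecidablePred P] (hP : ∀ b, P b ↔ b.1 k₀ = c) :
    (Finset.univ.filter P).card = q ^ (3 * r - 1) * (r * q * s) := by
  rw [card_filter_cell (fun k => if k = k₀ then {c} else Finset.univ) Finset.univ P fun b => ?_,
    prod_eq_mul_pow (a := q) k₀ fun k hk => ?_, card_labels, card_coordinates]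
  · simp
  · simp [hk, ZMod.card]
  · rw [hP]
    refine ⟨fun h => ⟨fun k => ?_, Finset.mem_univ _⟩, fun h => by simpa using h.1 k₀⟩
    split_ifs with hk
    · simp [hk, h]
    · simp

/-- The cells agreeing with the coordinates `x` exactly in `k₀`. -/
theorem card_cell_agree (k₀ : Fin 3 × ZMod r) (x : Fin 3 × ZMod r → ZMod q)
    (P : Cell r q s → Prop) [DecidablePred P] (hP : ∀ b, P b ↔ ∀ k, b.1 k = x k ↔ k = k₀) :
    (Finset.univ.filter P).card = (q - 1) ^ (3 * r - 1) * (r * q * s) := by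
  rw [card_filter_cell (fun k => if k = k₀ then {x k₀} else {x k}ᶜ) Finset.univ P fun b => ?_,
    prod_eq_mul_pow (a := q - 1) k₀ fun k hk => ?_, card_labels, card_coordinates]
  · simp
  · simp [hk, Finset.card_compl, ZMod.card]
  · rw [hP]
    refine ⟨fun h => ⟨fun k => ?_, Finset.mem_univ _⟩, fun h k => ?_⟩
    · split_ifs with hk
      · rw [hk, Finset.mem_singleton]
        exact (h k₀).2 rfl
      · rw [Finset.mem_compl, Finset.mem_singleton, h k]
        exact hk
    · have h1 := h.1 k
      split_ifs at h1 with hk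
      · simp only [hk, iff_true]
        rwa [hk, Finset.mem_singleton] at h1
      · simp only [hk, iff_false]
        simpa using h1

/-- The cells with value `c` in `k₀`, agreeing elsewhere with the coordinates `x` exactly
in `k₁`. -/
theorem card_cell_agree_of_value {k₀ k₁ : Fin 3 × ZMod r} (h01 : k₀ ≠ k₁) (c : ZMod q)
    (x : Fin 3 × ZMod r → ZMod q) (P : Cell r q s → Prop) [DecidablePred P]
    (hP : ∀ b, P b ↔ b.1 k₀ = c ∧ ∀ k ≠ k₀, b.1 k = x k ↔ k = k₁) :
    (Finset.univ.filter P).card = (q - 1) ^ (3 * r - 2) * (r * q * s) := by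
  rw [card_filter_cell (fun k => if k = k₀ then {c} else if k = k₁ then {x k} else {x k}ᶜ)
      Finset.univ P fun b => ?_,
    prod_eq_mul_mul_pow (a := q - 1) h01 fun k hk hk' => ?_, card_labels, card_coordinates]
  · simp [h01.symm]
  · simp [hk, hk', Finset.card_compl, ZMod.card]
  · rw [hP]
    refine ⟨fun h => ⟨fun k => ?_, Finset.mem_univ _⟩, fun h => ⟨?_, fun k hk => ?_⟩⟩
    · split_ifs with hk hk'
      · rw [hk, Finset.mem_singleton]
        exact h.1
      · rw [Finset.mem_singleton, h.2 k hk]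
        exact hk'
      · rw [Finset.mem_compl, Finset.mem_singleton, h.2 k hk]
        exact hk'
    · simpa using h.1 k₀
    · have h1 := h.1 k
      rw [if_neg hk] at h1
      split_ifs at h1 with hk'
      · simp only [hk', iff_true]
        rwa [hk', Finset.mem_singleton] at h1
      · simp only [hk', iff_false]
        simpa using h1

/-- The cells with given labels, agreeing nowhere with the coordinates `x` and avoiding a further
value in `k₀`. -/
theorem card_cell_disagree (k₀ : Fin 3 × ZMod r) {c : ZMod q} {x : Fin 3 × ZMod r → ZMod q}
    (hc : x k₀ ≠ c) (g : (ZMod r × ZMod q) × ZMod s) (P : Cell r q s → Prop) [DecidablePred P]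
    (hP : ∀ b, P b ↔ b.1 k₀ ≠ c ∧ (∀ k, b.1 k ≠ x k) ∧ b.2 = g) :
    (Finset.univ.filter P).card = (q - 2) * (q - 1) ^ (3 * r - 1) := by
  rw [card_filter_cell (fun k => if k = k₀ then {x k₀, c}ᶜ else {x k}ᶜ) {g} P fun b => ?_,
    prod_eq_mul_pow (a := q - 1) k₀ fun k hk => ?_, card_coordinates]
  · rw [if_pos rfl, Finset.card_compl, ZMod.card, Finset.card_pair hc, Finset.card_singleton,
      mul_one]
  · simp [hk, Finset.card_compl, ZMod.card]
  · rw [hP, Finset.mem_singleton]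
    refine ⟨fun h => ⟨fun k => ?_, h.2.2⟩, fun h => ⟨?_, fun k => ?_, h.2⟩⟩
    · split_ifs with hk
      · simp [hk, h.1, h.2.1]
      · simp [h.2.1]
    · have h1 := h.1 k₀
      simp only [if_true, Finset.mem_compl, Finset.mem_insert, Finset.mem_singleton, not_or] at h1
      exact h1.2
    · have h1 := h.1 k
      split_ifs at h1 with hk
      · simp only [Finset.mem_compl, Finset.mem_insert, Finset.mem_singleton, not_or] at h1
        rw [hk] at h1 ⊢
        exact h1.1
      · simpa using h1

end Cells

section Labelling

set_option maxHeartbeats 800000 in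
open Classical in
/-- Packing Hamilton cycles into an oriented graph with an equitable labelling by cells. -/
theorem exists_disjoint_isHamCycle_of_labelling {V : Type*} [Fintype V] {G : V → V → Prop}
    (hG : ∀ x y, G x y → ¬ G y x) {r q s : ℕ} [NeZero r] [NeZero q] [Fact s.Prime] (hs : s ≠ 2)
    (χ : V → Cell r q s) {η p : ℝ}
    (hout : ∀ v (P : Cell r q s → Prop),
      (1 / 2 - η) * p * (Finset.univ.filter P).card ≤
        (Finset.univ.filter fun w => G v w ∧ P (χ w)).card ∧
      ((Finset.univ.filter fun w => G v w ∧ P (χ w)).card : ℝ) ≤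
        (1 / 2 + η) * p * (Finset.univ.filter P).card)
    (hin : ∀ v (P : Cell r q s → Prop),
      (1 / 2 - η) * p * (Finset.univ.filter P).card ≤
        (Finset.univ.filter fun w => G w v ∧ P (χ w)).card ∧
      ((Finset.univ.filter fun w => G w v ∧ P (χ w)).card : ℝ) ≤
        (1 / 2 + η) * p * (Finset.univ.filter P).card)
    (hV : ∀ P : Cell r q s → Prop,
      (1 - η) * p * (Finset.univ.filter P).card ≤ (Finset.univ.filter fun w => P (χ w)).card ∧
      ((Finset.univ.filter fun w => P (χ w)).card : ℝ) ≤
        (1 + η) * p * (Finset.univ.filter P).card)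
    (hp : Fintype.card V = p * (q ^ (3 * r) * (r * q * s) : ℕ)) (hη : η ≤ 1) {δ Δ d κ m : ℕ}
    (hδ : δ ≤ (1 / 2 - η) * p * ((q - 2) * (q - 1) ^ (3 * r - 1) : ℕ))
    (hΔ : (1 / 2 + η) * p * ((q - 2) * (q - 1) ^ (3 * r - 1) : ℕ) ≤ Δ)
    (hκ : 3 * Fintype.card V ≤ s * κ)
    (hd : (1 + η) * p * (q ^ (3 * r - 1) * (r * q * s) : ℕ) ≤
      2 * ((1 / 2 - η) * p * ((q - 1) ^ (3 * r - 1) * (r * q * s) : ℕ)) + d)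
    (hpool : ((2 * κ + (Δ + s * (Δ - δ)) : ℕ) : ℝ) ≤
      (1 / 2 - η) * p * ((q - 1) ^ (3 * r - 2) * (r * q * s) : ℕ))
    (hm : 200 * (1 + κ + (d + 2 * (s * Δ))) ≤ m)
    (hN : ((10 ^ 9 * m : ℕ) : ℝ) ≤ (1 - η) * p * (q ^ (3 * r - 1) * (r * q * s) : ℕ))
    (hlog : (Fintype.card V : ℝ) ^ 2 * (995 / 1000) ^ m < 1) :
    ∃ (N : ℕ) (f : Fin N → ZMod (Fintype.card V) → V),
      r * q * ((s - 1) * (Δ - s * (Δ - δ))) ≤ N ∧ (∀ j, IsHamCycle G (f j)) ∧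
      ∀ j j', j ≠ j' → ∀ x y, CycleEdge (f j) x y → ¬ CycleEdge (f j') x y := by
  have hs0 : 0 < s := (Fact.out : s.Prime).pos
  have : NeZero s := ⟨hs0.ne'⟩
  have hp0 : 0 ≤ p := by
    have h1 : (0 : ℝ) < (q ^ (3 * r) * (r * q * s) : ℕ) := by
      have := NeZero.pos r
      have := NeZero.pos q
      positivity
    have h2 : 0 ≤ p * (q ^ (3 * r) * (r * q * s) : ℕ) := hp ▸ Nat.cast_nonneg _
    exact nonneg_of_mul_nonneg_left h2 h1
  have htransfer : ∀ (E : V → Prop) (lo hi : ℝ), (∀ P : Cell r q s → Prop,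
      lo * p * (Finset.univ.filter P).card ≤ (Finset.univ.filter fun w => E w ∧ P (χ w)).card ∧
      ((Finset.univ.filter fun w => E w ∧ P (χ w)).card : ℝ) ≤
        hi * p * (Finset.univ.filter P).card) →
      ∀ (P : Cell r q s → Prop) (c : ℕ), (∀ [DecidablePred P], (Finset.univ.filter P).card = c) →
      ∀ (Q : V → Prop) {_ : DecidablePred Q}, (∀ w, Q w ↔ E w ∧ P (χ w)) →
      lo * p * c ≤ (Finset.univ.filter Q).card ∧
        ((Finset.univ.filter Q).card : ℝ) ≤ hi * p * c := by
    intro E lo hi h P c hc Q _ hQ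
    have h1 : (Finset.univ.filter Q).card = (Finset.univ.filter fun w => E w ∧ P (χ w)).card := by
      congr 1
      ext w
      simp [hQ]
    rw [h1, ← hc]
    exact h P
  have hV' := htransfer (fun _ => True) (1 - η) (1 + η) fun P => by
    have h1 := hV P
    simpa only [true_and] using h1
  have hout' := fun v => htransfer (G v) (1 / 2 - η) (1 / 2 + η) (hout v)
  have hin' := fun v => htransfer (fun w => G w v) (1 / 2 - η) (1 / 2 + η) (hin v)
  let U : ZMod r × ZMod q → Finset V := fun l =>
    Finset.univ.filter fun v => (χ v).1 (0, l.1) = l.2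
  have hU : ∀ l v, v ∈ U l ↔ (χ v).1 (0, l.1) = l.2 := fun l v => by simp [U]
  have hUcard : ∀ l, (1 - η) * p * (q ^ (3 * r - 1) * (r * q * s) : ℕ) ≤ (U l).card ∧
      ((U l).card : ℝ) ≤ (1 + η) * p * (q ^ (3 * r - 1) * (r * q * s) : ℕ) := by
    intro l
    exact hV' (fun b => b.1 (0, l.1) = l.2) _ (card_cell_coordinate (0, l.1) l.2 _ fun b => Iff.rfl)
      _ fun w => by simp
  have hdeg : ∀ l (A : Finset V) (Q : V → Prop) [DecidablePred Q], (∀ w, Q w → w ∈ A) →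
      (1 / 2 - η) * p * ((q - 1) ^ (3 * r - 1) * (r * q * s) : ℕ) ≤ (Finset.univ.filter Q).card →
      (U l).card ≤ 2 * A.card + d := by
    intro l A Q _ hQ hD
    have h0 : (Finset.univ.filter Q).card ≤ A.card :=
      Finset.card_le_card fun w hw => hQ w (by simpa using hw)
    have h0' : ((Finset.univ.filter Q).card : ℝ) ≤ A.card := by exact_mod_cast h0
    have h1 : ((U l).card : ℝ) ≤ (2 * A.card + d : ℕ) := by
      push_cast at hd ⊢
      have h2 := (hUcard l).2
      push_cast at h2 hD
      linarith
    exact_mod_cast h1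
  have hpoolcard : ∀ (A : Finset V) (Q : V → Prop) [DecidablePred Q], (∀ w, Q w → w ∈ A) →
      (1 / 2 - η) * p * ((q - 1) ^ (3 * r - 2) * (r * q * s) : ℕ) ≤ (Finset.univ.filter Q).card →
      2 * κ + (Δ + s * (Δ - δ)) ≤ A.card := by
    intro A Q _ hQ hD
    refine le_trans ?_ (Finset.card_le_card fun w hw => hQ w (by simpa using hw) :
      (Finset.univ.filter Q).card ≤ A.card)
    exact_mod_cast hpool.trans hD
  have hwin : ∀ (D : ℕ), (1 / 2 - η) * p * ((q - 2) * (q - 1) ^ (3 * r - 1) : ℕ) ≤ D ∧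
      (D : ℝ) ≤ (1 / 2 + η) * p * ((q - 2) * (q - 1) ^ (3 * r - 1) : ℕ) → δ ≤ D ∧ D ≤ Δ := by
    intro D hD
    exact ⟨by exact_mod_cast hδ.trans hD.1, by exact_mod_cast hD.2.trans hΔ⟩
  have key := exists_disjoint_isHamCycle (Λ := ZMod r × ZMod q) hG hs
    (fun v => (χ v).2.2) U (B := fun l v w => G v w ∧ CellFree l (χ v) (χ w))
    (C := fun l v w => G v w ∧ CellLinked l (χ v) (χ w)) (δ := δ) (Δ := Δ) (d := d) (κ := κ)
    (m := m) (fun l v w h => h.1) (fun l v w h => h.1)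
    (fun l v w h => ⟨fun h' => h.2.1 ((hU _ _).1 h'), fun h' => h.2.2.1 ((hU _ _).1 h')⟩)
    (fun l l' v w h h' => h.2.2.2.2.symm.trans h'.2.2.2.2)
    (fun l l' v w h h' => h.2.unique h'.2) (fun l l' v w h h' => h'.2.not_free h.2)
    (fun l e _ v hv => by
      rw [hU] at hv
      refine hwin _ (hout' v (fun b => b.1 (0, l.1) ≠ l.2 ∧ (∀ k, b.1 k ≠ (χ v).1 k) ∧
        b.2 = (l - (χ v).2.1, (χ v).2.2 + e)) _
        (card_cell_disagree (0, l.1) hv _ _ fun b => Iff.rfl) _ fun w => ?_)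
      rw [CellFree, and_assoc, Prod.ext_iff (x := (χ w).2), eq_sub_iff_add_eq']
      simp only [ne_comm (a := (χ w).1 _) (b := (χ v).1 _)]
      tauto)
    (fun l e _ w hw => by
      rw [hU] at hw
      refine hwin _ (hin' w (fun b => b.1 (0, l.1) ≠ l.2 ∧ (∀ k, b.1 k ≠ (χ w).1 k) ∧
        b.2 = (l - (χ w).2.1, (χ w).2.2 - e)) _
        (card_cell_disagree (0, l.1) hw _ _ fun b => Iff.rfl) _ fun v => ?_)
      rw [CellFree, and_assoc, Prod.ext_iff (x := (χ v).2), eq_sub_iff_add_eq, eq_sub_iff_add_eq,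
        eq_comm (a := (χ w).2.2)]
      tauto)
    (fun e => by
      have h1 : ((Finset.univ.filter fun v => (χ v).2.2 = e).card : ℝ) ≤
          (1 + η) * p * (q ^ (3 * r) * (r * q) : ℕ) :=
        (hV' (fun b => b.2.2 = e) _ (card_cell_level e _ fun b => Iff.rfl)
        (fun v => (χ v).2.2 = e) fun w => by simp).2
      have h2 : ((s * (Finset.univ.filter fun v => (χ v).2.2 = e).card : ℕ) : ℝ) ≤
          (2 * Fintype.card V : ℕ) := by
        push_cast at h1 hp ⊢
        rw [hp]
        calc (s : ℝ) * _ ≤ s * ((1 + η) * p * (q ^ (3 * r) * (r * q))) :=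
              mul_le_mul_of_nonneg_left h1 (Nat.cast_nonneg s)
          _ = (1 + η) * (p * (q ^ (3 * r) * (r * q * s))) := by ring
          _ ≤ 2 * (p * (q ^ (3 * r) * (r * q * s))) :=
              mul_le_mul_of_nonneg_right (by linarith) (by positivity)
      exact_mod_cast h2) hκ
    (fun l u hu => by
      rw [hU] at hu
      refine hdeg l _ (fun w => G u w ∧ ∀ k, (χ w).1 k = (χ u).1 k ↔ k = (0, l.1))
        (fun w hw => ?_) (hout' u (fun b => ∀ k, b.1 k = (χ u).1 k ↔ k = (0, l.1)) _
          (card_cell_agree (0, l.1) (χ u).1 _ fun b => Iff.rfl) _ fun w => Iff.rfl).1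
      have h1 : (χ w).1 (0, l.1) = l.2 := ((hw.2 _).2 rfl).trans hu
      simp only [Finset.mem_filter, hU]
      exact ⟨h1, hw.1, Or.inl ⟨hu, h1, fun k => eq_comm.trans (hw.2 k)⟩⟩)
    (fun l u hu => by
      rw [hU] at hu
      refine hdeg l _ (fun w => G w u ∧ ∀ k, (χ w).1 k = (χ u).1 k ↔ k = (0, l.1))
        (fun w hw => ?_) (hin' u (fun b => ∀ k, b.1 k = (χ u).1 k ↔ k = (0, l.1)) _
          (card_cell_agree (0, l.1) (χ u).1 _ fun b => Iff.rfl) _ fun w => Iff.rfl).1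
      have h1 : (χ w).1 (0, l.1) = l.2 := ((hw.2 _).2 rfl).trans hu
      simp only [Finset.mem_filter, hU]
      exact ⟨h1, hw.1, Or.inl ⟨h1, hu, hw.2⟩⟩)
    (fun l v hv => by
      rw [hU] at hv
      refine hpoolcard _ (fun w => G v w ∧ (χ w).1 (0, l.1) = l.2 ∧
          ∀ k ≠ (0, l.1), (χ w).1 k = (χ v).1 k ↔ k = (1, l.1))
        (fun w hw => ?_) (hout' v (fun b => b.1 (0, l.1) = l.2 ∧
          ∀ k ≠ (0, l.1), b.1 k = (χ v).1 k ↔ k = (1, l.1)) _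
          (card_cell_agree_of_value (by simp) l.2 (χ v).1 _ fun b => Iff.rfl) _ fun w => Iff.rfl).1
      simp only [Finset.mem_filter, hU]
      refine ⟨hw.2.1, hw.1, Or.inr (Or.inl ⟨hv, hw.2.1, fun k => eq_comm.trans ?_⟩)⟩
      by_cases hk : k = (0, l.1)
      · simp [hk, hw.2.1, Ne.symm hv]
      · exact hw.2.2 k hk)
    (fun l v hv => by
      rw [hU] at hv
      refine hpoolcard _ (fun w => G w v ∧ (χ w).1 (0, l.1) = l.2 ∧
          ∀ k ≠ (0, l.1), (χ w).1 k = (χ v).1 k ↔ k = (2, l.1))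
        (fun w hw => ?_) (hin' v (fun b => b.1 (0, l.1) = l.2 ∧
          ∀ k ≠ (0, l.1), b.1 k = (χ v).1 k ↔ k = (2, l.1)) _
          (card_cell_agree_of_value (by simp) l.2 (χ v).1 _ fun b => Iff.rfl) _ fun w => Iff.rfl).1
      simp only [Finset.mem_filter, hU]
      refine ⟨hw.2.1, hw.1, Or.inr (Or.inr ⟨hw.2.1, hv, fun k => ?_⟩)⟩
      by_cases hk : k = (0, l.1)
      · simp [hk, hw.2.1, Ne.symm hv]
      · exact hw.2.2 k hk)
    hm (fun l => by exact_mod_cast hN.trans (hUcard l).1)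
    (fun l => by
      refine lt_of_le_of_lt (mul_le_mul_of_nonneg_right ?_ (by positivity)) hlog
      have h1 : ((U l).card : ℝ) ≤ Fintype.card V := by exact_mod_cast Finset.card_le_univ _
      gcongr)
  simpa only [Fintype.card_prod, ZMod.card] using key

end Labelling

section Parameters

theorem pred_pow_bounds {q : ℕ} (hq : 2 ≤ q) (k : ℕ) :
    (1 - k / q : ℝ) * q ^ k ≤ ((q - 1) ^ k : ℕ) ∧ (((q - 1) ^ k : ℕ) : ℝ) ≤ q ^ k := by
  have hq0 : (2 : ℝ) ≤ q := by exact_mod_cast hq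
  have h1 : (1 : ℝ) / q ≤ 1 := (div_le_one (by linarith)).2 (by linarith)
  have h2 : (((q - 1) ^ k : ℕ) : ℝ) = (1 + -(1 / q : ℝ)) ^ k * q ^ k := by
    rw [← mul_pow]
    push_cast [Nat.cast_sub (by omega : 1 ≤ q)]
    congr 1
    field_simp
    ring
  constructor
  · rw [h2]
    refine mul_le_mul_of_nonneg_right ?_ (by positivity)
    refine le_trans (le_of_eq ?_) (one_add_mul_le_pow (by linarith) k)
    ring
  · exact_mod_cast Nat.pow_le_pow_left (Nat.sub_le q 1) k

/-- The sizes of the cell classes relative to the number of vertices. -/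
theorem cell_class_bounds {r q s n : ℕ} (hr : 1 ≤ r) (hq : 6 * r ≤ q) (hs : 1 ≤ s) {p : ℝ}
    (hp : (n : ℝ) = p * (q ^ (3 * r) * (r * q * s) : ℕ)) :
    p * (q ^ (3 * r - 1) * (r * q * s) : ℕ) = n / q ∧
    (1 - 3 * r / q) * (n / q) ≤ p * ((q - 1) ^ (3 * r - 1) * (r * q * s) : ℕ) ∧
    n / q / (2 * q) ≤ p * ((q - 1) ^ (3 * r - 2) * (r * q * s) : ℕ) ∧
    (1 - (3 * r + 1) / q) * n ≤ p * ((q - 2) * (q - 1) ^ (3 * r - 1) : ℕ) * (r * q * s) ∧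
    p * ((q - 2) * (q - 1) ^ (3 * r - 1) : ℕ) * (r * q * s) ≤ n := by
  obtain ⟨k, hk⟩ : ∃ k, 3 * r = k + 2 := ⟨3 * r - 2, by omega⟩
  have hr0 : (1 : ℝ) ≤ r := by exact_mod_cast hr
  have hs0 : (1 : ℝ) ≤ s := by exact_mod_cast hs
  have hq0 : 6 * (r : ℝ) ≤ q := by exact_mod_cast hq
  have hkr : (k : ℝ) + 2 = 3 * r := by exact_mod_cast hk.symm
  have e1 : 3 * r - 1 = k + 1 := by omega
  have e2 : 3 * r - 2 = k := by omega
  obtain ⟨h1, h2⟩ := pred_pow_bounds (q := q) (by omega) (k + 1)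
  obtain ⟨h3, h4⟩ := pred_pow_bounds (q := q) (by omega) k
  rw [e1, e2]
  rw [hk] at hp
  have hqpos : (0 : ℝ) < q := by linarith
  have hp0 : 0 ≤ p := by
    have h5 : (0 : ℝ) < (q ^ (k + 2) * (r * q * s) : ℕ) := by push_cast; positivity
    exact nonneg_of_mul_nonneg_left (hp ▸ Nat.cast_nonneg n) h5
  push_cast at hp h1 h2 h3 h4 ⊢
  rw [Nat.cast_sub (by omega)] at h1 h2 h3 h4 ⊢
  rw [Nat.cast_sub (by omega)]
  push_cast at h1 h2 h3 h4 ⊢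
  have hnq : (n : ℝ) / q = p * (q ^ (k + 1) * (r * q * s)) := by
    rw [hp, pow_succ]
    field_simp
  refine ⟨hnq.symm, ?_, ?_, ?_, ?_⟩
  · rw [hnq]
    calc (1 - 3 * r / q) * (p * (q ^ (k + 1) * (r * q * s)))
        ≤ (1 - (k + 1) / q) * (p * (q ^ (k + 1) * (r * q * s))) := by
          refine mul_le_mul_of_nonneg_right ?_ (by positivity)
          have : ((k : ℝ) + 1) / q ≤ 3 * r / q := by gcongr; linarith
          linarith
      _ = p * (((1 - (k + 1) / q) * q ^ (k + 1)) * (r * q * s)) := by ring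
      _ ≤ _ := by gcongr
  · have h5 : (1 / 2 : ℝ) ≤ 1 - k / q := by
      rw [le_sub_comm, div_le_iff₀ hqpos]
      linarith
    calc (n : ℝ) / q / (2 * q) = p * ((1 / 2 * q ^ k) * (r * q * s)) := by
          rw [hnq, pow_succ]
          field_simp
      _ ≤ p * (((1 - k / q) * q ^ k) * (r * q * s)) := by gcongr
      _ ≤ _ := by gcongr
  · have h5 : (1 - (3 * r + 1) / q : ℝ) ≤ (1 - (k + 1) / q) * (1 - 2 / q) := by
      have h6 : (0 : ℝ) ≤ (k + 1) / q * (2 / q) := by positivity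
      have h7 : (3 * r + 1 : ℝ) / q = (k + 1) / q + 2 / q := by rw [← hkr]; ring
      nlinarith
    calc (1 - (3 * r + 1) / q : ℝ) * n ≤ (1 - (k + 1) / q) * (1 - 2 / q) * n :=
          mul_le_mul_of_nonneg_right h5 (Nat.cast_nonneg n)
      _ = p * ((q - 2) * ((1 - (k + 1) / q) * q ^ (k + 1))) * (r * q * s) := by
          rw [hp, pow_succ, pow_succ]
          field_simp
      _ ≤ _ := by
          have : (0 : ℝ) ≤ q - 2 := by linarith
          gcongr
  · calc p * ((q - 2) * (q - 1) ^ (k + 1)) * (r * q * s)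
        ≤ p * (q * q ^ (k + 1)) * (r * q * s) := by
          have h8 : (0 : ℝ) ≤ (q - 1) ^ (k + 1) := pow_nonneg (by linarith) _
          gcongr
          linarith
      _ = n := by rw [hp]; ring

theorem natCast_div_bounds (n : ℕ) {Q : ℕ} (hQ : 0 < Q) :
    (n : ℝ) / Q - 1 ≤ (n / Q : ℕ) ∧ ((n / Q : ℕ) : ℝ) ≤ n / Q := by
  refine ⟨?_, Nat.cast_div_le⟩
  have h1 : (n : ℝ) < Q * ((n / Q : ℕ) + 1) := by exact_mod_cast Nat.lt_mul_div_succ n hQ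
  rw [sub_le_iff_le_add, div_le_iff₀ (by exact_mod_cast hQ)]
  linarith

theorem packing_count_bound {r q s n X : ℕ} (hq : 0 < q) (hs : 1 ≤ s) {η η₁ t : ℝ}
    (hη0 : 0 < η) (hηs : η * s ≤ 1 / 1000)
    (h1 : (1 / 2 + η) * t - s * (2 * η * t + 2) ≤ X) (ht : 0 ≤ t)
    (ht1 : (1 - (3 * r + 1) / q) * n ≤ t * (r * q * s)) (ht2 : t * (r * q * s) ≤ n)
    (h1s : 10 ≤ η₁ * s) (h1q : 10 * (3 * r + 1) ≤ η₁ * q) (h1η : 10 * (η * s) ≤ η₁)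
    (h1n : 10 * (r * q * s ^ 2 : ℝ) ≤ η₁ * n) :
    (1 / 2 - η₁) * n ≤ (r * q * ((s - 1) * X) : ℕ) := by
  have hq0 : (0 : ℝ) < q := by exact_mod_cast hq
  have hs0 : (1 : ℝ) ≤ s := by exact_mod_cast hs
  have hn0 : (0 : ℝ) ≤ n := Nat.cast_nonneg n
  push_cast [Nat.cast_sub hs]
  have h2 : (r * q * ((s - 1) * ((1 / 2 - 2 * (η * s)) * t - 2 * s)) : ℝ) ≤
      r * q * ((s - 1) * X) := by
    have h3 : (1 / 2 - 2 * (η * s)) * t - 2 * s ≤ X := by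
      have h4 : 0 ≤ η * t := by positivity
      linarith
    have h4 : (0 : ℝ) ≤ s - 1 := by linarith
    gcongr
  refine le_trans ?_ h2
  have h3 : t * (r * q) ≤ η₁ / 10 * n := by
    have h4 : (1 : ℝ) ≤ η₁ / 10 * s := by linarith
    have h5 : t * (r * q) * 1 ≤ t * (r * q) * (η₁ / 10 * s) :=
      mul_le_mul_of_nonneg_left h4 (by positivity)
    have h6 : η₁ / 10 * (t * (r * q * s)) ≤ η₁ / 10 * n :=
      mul_le_mul_of_nonneg_left ht2 (by linarith [mul_pos hη0 (by linarith : (0 : ℝ) < s)])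
    linarith
  have h4 : (3 * r + 1 : ℝ) / q * n ≤ η₁ / 10 * n := by
    refine mul_le_mul_of_nonneg_right ?_ hn0
    rw [div_le_iff₀ hq0]
    linarith
  have h5 : (1 / 2 - 2 * (η * s)) * (n - η₁ / 5 * n) ≤
      (1 / 2 - 2 * (η * s)) * (t * (r * q * s) - t * (r * q)) :=
    mul_le_mul_of_nonneg_left (by linarith) (by linarith)
  have h6 : 0 ≤ η * s := by positivity
  have h7 : η * s * n ≤ η₁ / 10 * n := mul_le_mul_of_nonneg_right (by linarith) hn0
  have h8 : 0 ≤ η * s * (η₁ / 5 * n) :=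
    mul_nonneg h6 (mul_nonneg (by linarith) hn0)
  have h9 : (0 : ℝ) ≤ r * q * s := by positivity
  nlinarith

set_option maxHeartbeats 1000000 in
/-- Sizes suitable for packing, given well separated parameters. -/
theorem exists_packing_sizes {r q s n Q : ℕ} (hQ : (Q : ℝ) = 2 * 10 ^ 9 * q)
    (hr : 10 ^ 13 ≤ r) (hq : 10 ^ 14 * r ≤ q)
    (hs : 1000 * q ^ 2 ≤ s) {η η₁ p : ℝ} (hη0 : 0 < η) (hηs : η * s ≤ 1 / 1000)
    (hp : (n : ℝ) = p * (q ^ (3 * r) * (r * q * s) : ℕ))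
    (h1s : 10 ≤ η₁ * s) (h1q : 10 * (3 * r + 1) ≤ η₁ * q) (h1η : 10 * (η * s) ≤ η₁)
    (h1n : 10 * (r * q * s ^ 2 : ℝ) ≤ η₁ * n) (hn : 10 ^ 13 * q ^ 2 * s ≤ n) :
    ∃ δ Δ d κ : ℕ,
    δ ≤ (1 / 2 - η) * p * ((q - 2) * (q - 1) ^ (3 * r - 1) : ℕ) ∧
    (1 / 2 + η) * p * ((q - 2) * (q - 1) ^ (3 * r - 1) : ℕ) ≤ Δ ∧
    3 * n ≤ s * κ ∧
    (1 + η) * p * (q ^ (3 * r - 1) * (r * q * s) : ℕ) ≤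
      2 * ((1 / 2 - η) * p * ((q - 1) ^ (3 * r - 1) * (r * q * s) : ℕ)) + d ∧
    ((2 * κ + (Δ + s * (Δ - δ)) : ℕ) : ℝ) ≤
      (1 / 2 - η) * p * ((q - 1) ^ (3 * r - 2) * (r * q * s) : ℕ) ∧
    200 * (1 + κ + (d + 2 * (s * Δ))) ≤ n / Q ∧
    ((10 ^ 9 * (n / Q) : ℕ) : ℝ) ≤
      (1 - η) * p * (q ^ (3 * r - 1) * (r * q * s) : ℕ) ∧
    (1 / 2 - η₁) * n ≤ (r * q * ((s - 1) * (Δ - s * (Δ - δ))) : ℕ) := by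
  have hr0 : (10 : ℝ) ^ 13 ≤ r := by exact_mod_cast hr
  have hq0 : (10 : ℝ) ^ 14 * r ≤ q := by exact_mod_cast hq
  have hs0 : 1000 * (q : ℝ) ^ 2 ≤ s := by exact_mod_cast hs
  have hn0 : (10 : ℝ) ^ 13 * q ^ 2 * s ≤ n := by exact_mod_cast hn
  have hq1 : (10 : ℝ) ^ 27 ≤ q := by linarith
  have hqq : (q : ℝ) ≤ q ^ 2 := le_self_pow₀ (by linarith) two_ne_zero
  have hs1 : (10 : ℝ) ^ 27 ≤ s := by linarith
  have hs1' : 1 ≤ s := by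
    have : (1 : ℝ) ≤ s := by linarith
    exact_mod_cast this
  obtain ⟨ht1, ht2, ht3, ht4, ht5⟩ :=
    cell_class_bounds (n := n) (by omega : 1 ≤ r) (by omega : 6 * r ≤ q) hs1' hp
  have hη1 : η ≤ 1 / 10 ^ 14 := by
    have h1 : η * 10 ^ 27 ≤ η * s := mul_le_mul_of_nonneg_left hs1 hη0.le
    linarith
  simp only [mul_assoc (_ + η) p, mul_assoc (_ - η) p]
  set t₁ := p * (q ^ (3 * r - 1) * (r * q * s) : ℕ) with h_t₁
  set t₂ := p * ((q - 1) ^ (3 * r - 1) * (r * q * s) : ℕ) with h_t₂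
  set t₃ := p * ((q - 1) ^ (3 * r - 2) * (r * q * s) : ℕ) with h_t₃
  set t₄ := p * ((q - 2) * (q - 1) ^ (3 * r - 1) : ℕ) with h_t₄
  have hrpos : (0 : ℝ) < r := by linarith
  have hqpos : (0 : ℝ) < q := by linarith
  have hspos : (0 : ℝ) < s := by linarith
  have hnpos : (0 : ℝ) ≤ n := Nat.cast_nonneg n
  set w := (n : ℝ) / q with hw
  set u := (n : ℝ) / s with hu
  have hwn : w * q = n := div_mul_cancel₀ _ hqpos.ne'
  have hun : u * s = n := div_mul_cancel₀ _ hspos.ne'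
  have hw0 : 0 ≤ w := by positivity
  have hu0 : 0 ≤ u := by positivity
  have hrq : 3 * r / q ≤ (3 / 10 ^ 14 : ℝ) := by
    rw [div_le_iff₀ hqpos]
    linarith
  have hrq' : (3 * r + 1) / q ≤ (1 / 10 ^ 13 : ℝ) := by
    rw [div_le_iff₀ hqpos]
    linarith
  have ht₄ : 0 ≤ t₄ := by
    have h1 : 0 ≤ t₄ * (r * q * s) := le_trans (mul_nonneg (by linarith) hnpos) ht4
    exact nonneg_of_mul_nonneg_left h1 (by positivity)
  have hst : s * t₄ ≤ w / r := by
    rw [le_div_iff₀ hrpos, hw, le_div_iff₀ hqpos]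
    linarith
  have hwr : w / r ≤ w / 10 ^ 13 := by gcongr
  have htu : t₄ ≤ u := by
    rw [hu, le_div_iff₀ hspos]
    have h1 : (1 : ℝ) ≤ r * q :=
      one_le_mul_of_one_le_of_one_le (by linarith) (by linarith)
    have h2 : t₄ * s * 1 ≤ t₄ * s * (r * q) := mul_le_mul_of_nonneg_left h1 (by positivity)
    linarith
  have huw : u ≤ w / q / 1000 := by
    rw [hu, hw, div_div, div_div]
    refine div_le_div_of_nonneg_left hnpos (by positivity) ?_
    linarith
  have hwq : w / q ≤ w / 10 ^ 27 := by gcongr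
  have hws : 10 ^ 13 * (s : ℝ) ≤ w / q := by
    rw [le_div_iff₀ hqpos, hw, le_div_iff₀ hqpos]
    linarith
  have hws' : 10 ^ 13 * (s : ℝ) ≤ w := by
    refine hws.trans (div_le_self hw0 (by linarith))
  have hst2 : η * (s * t₄) ≤ u := by
    have h1 : η * s * t₄ ≤ 1 * t₄ := mul_le_mul_of_nonneg_right (by linarith) ht₄
    linarith
  set Δ := ⌈(1 / 2 + η) * t₄⌉₊ with hΔ
  set δ := ⌊(1 / 2 - η) * t₄⌋₊ with hδ
  set d := ⌈(1 + η) * t₁ - 2 * ((1 / 2 - η) * t₂)⌉₊ with hd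
  have hΔ1 : (1 / 2 + η) * t₄ ≤ Δ := Nat.le_ceil _
  have hΔ2 : (Δ : ℝ) < (1 / 2 + η) * t₄ + 1 := Nat.ceil_lt_add_one (by positivity)
  have hδ1 : (δ : ℝ) ≤ (1 / 2 - η) * t₄ :=
    Nat.floor_le (mul_nonneg (by linarith) ht₄)
  have hδ2 : (1 / 2 - η) * t₄ < δ + 1 := Nat.lt_floor_add_one _
  have hδΔ : δ ≤ Δ := by
    have : (δ : ℝ) ≤ Δ :=
      hδ1.trans ((mul_le_mul_of_nonneg_right (by linarith) ht₄).trans hΔ1)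
    exact_mod_cast this
  have hdiff : ((Δ - δ : ℕ) : ℝ) ≤ 2 * η * t₄ + 2 := by
    rw [Nat.cast_sub hδΔ]
    linarith
  have hsdiff : (s : ℝ) * (Δ - δ : ℕ) ≤ s * (2 * η * t₄ + 2) :=
    mul_le_mul_of_nonneg_left hdiff hspos.le
  have hd1 : (1 + η) * t₁ - 2 * ((1 / 2 - η) * t₂) ≤ d := Nat.le_ceil _
  have hd2 : (d : ℝ) ≤ w / 10 ^ 13 + 1 := by
    have h1 : (1 - 2 * η) * ((1 - 3 * r / q) * w) ≤ (1 - 2 * η) * t₂ :=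
      mul_le_mul_of_nonneg_left ht2 (by linarith)
    have h2 : (1 - 2 / 10 ^ 14 : ℝ) * ((1 - 3 / 10 ^ 14) * w) ≤
        (1 - 2 * η) * ((1 - 3 * r / q) * w) := by gcongr <;> linarith
    have h4 : η * w ≤ 1 / 10 ^ 14 * w := mul_le_mul_of_nonneg_right hη1 hw0
    have h3 : (1 + η) * t₁ - 2 * ((1 / 2 - η) * t₂) ≤ w / 10 ^ 13 := by
      rw [ht1]
      linarith
    have h5 : (d : ℝ) ≤ ⌈w / 10 ^ 13⌉₊ := by exact_mod_cast Nat.ceil_mono h3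
    exact h5.trans (Nat.ceil_lt_add_one (by positivity)).le
  have hκ : ((3 * n / s + 1 : ℕ) : ℝ) ≤ 3 * u + 1 := by
    have h1 : ((3 * n / s : ℕ) : ℝ) ≤ (3 * n : ℕ) / s := Nat.cast_div_le
    push_cast at h1 ⊢
    rw [hu, ← mul_div_assoc]
    linarith
  have hQ0 : 0 < Q := by
    have : (0 : ℝ) < Q := hQ ▸ by positivity
    exact_mod_cast this
  have hwQ : (n : ℝ) / Q = w / (2 * 10 ^ 9) := by
    rw [hQ, hw]
    field_simp
  obtain ⟨hm, hm'⟩ := natCast_div_bounds n hQ0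
  rw [hwQ] at hm hm'
  have hsΔ : (s : ℝ) * Δ ≤ s * ((1 / 2 + η) * t₄ + 1) := mul_le_mul_of_nonneg_left hΔ2.le hspos.le
  refine ⟨δ, Δ, d, 3 * n / s + 1, hδ1, hΔ1, ?_, by linarith, ?_, ?_, ?_, ?_⟩
  · exact (Nat.lt_mul_div_succ (3 * n) hs1').le
  · push_cast at hκ ⊢
    have h1 : (1 / 4 : ℝ) * (w / (2 * q)) ≤ (1 / 2 - η) * t₃ :=
      mul_le_mul (by linarith) ht3 (by positivity) (by linarith)
    have h2 : w / (2 * q) = w / q / 2 := by field_simp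
    have h3 : η * t₄ ≤ 1 * t₄ := mul_le_mul_of_nonneg_right (by linarith) ht₄
    linarith
  · have h1 : ((200 * (1 + (3 * n / s + 1) + (d + 2 * (s * Δ))) : ℕ) : ℝ) ≤
        (n / Q : ℕ) := by
      refine le_trans ?_ hm
      push_cast at hκ ⊢
      linarith
    exact_mod_cast h1
  · push_cast
    rw [ht1]
    have h3 : (1 / 2) * w ≤ (1 - η) * w := mul_le_mul_of_nonneg_right (by linarith) hw0
    linarith
  · refine packing_count_bound (by omega) hs1' hη0 hηs ?_ ht₄ ht4 ht5 h1s h1q h1η h1n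
    have h2 : (Δ : ℝ) ≤ (Δ - s * (Δ - δ) : ℕ) + s * (Δ - δ : ℕ) := by
      exact_mod_cast le_tsub_add
    linarith

end Parameters

section Main

open Filter Topology

theorem exists_separated_parameters {η₁ : ℝ} (h : 0 < η₁) :
    ∃ r q s : ℕ, 10 ^ 13 ≤ r ∧ 10 ^ 14 * r ≤ q ∧ 1000 * q ^ 2 ≤ s ∧ s.Prime ∧
      10 ≤ η₁ * s ∧ 10 * (3 * r + 1 : ℝ) ≤ η₁ * q := by
  obtain ⟨r, hr⟩ : ∃ r : ℕ, 10 ^ 13 ≤ r := ⟨_, le_rfl⟩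
  obtain ⟨a, ha⟩ := exists_nat_ge (10 * (3 * r + 1 : ℝ) / η₁)
  obtain ⟨b, hb⟩ := exists_nat_ge (10 / η₁)
  obtain ⟨q, hq⟩ : ∃ q : ℕ, q = max (10 ^ 14 * r) a := ⟨_, rfl⟩
  obtain ⟨s, hs, hsp⟩ := Nat.exists_infinite_primes (max (1000 * q ^ 2) b)
  refine ⟨r, q, s, hr, hq ▸ le_max_left _ _, (le_max_left _ _).trans hs, hsp, ?_, ?_⟩
  · have h1 : (b : ℝ) ≤ s := by exact_mod_cast (le_max_right _ _).trans hs
    rw [← div_le_iff₀' h]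
    exact hb.trans h1
  · have h1 : (a : ℝ) ≤ q := by exact_mod_cast hq ▸ le_max_right _ _
    rw [← div_le_iff₀' h]
    exact ha.trans h1

theorem eventually_sq_mul_pow_div_lt_one {Q : ℕ} (hQ : 0 < Q) :
    ∀ᶠ n : ℕ in atTop, (n : ℝ) ^ 2 * (995 / 1000) ^ (n / Q) < 1 := by
  have hdiv : Tendsto (fun n : ℕ => n / Q) atTop atTop :=
    Nat.tendsto_div_const_atTop hQ.ne'
  have h1 := ((tendsto_pow_const_mul_const_pow_of_abs_lt_one 2
    (by norm_num [abs_lt] : |(995 / 1000 : ℝ)| < 1)).const_mul (4 * (Q : ℝ) ^ 2)).comp hdiv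
  rw [mul_zero] at h1
  filter_upwards [h1.eventually_lt_const one_pos, eventually_ge_atTop Q] with n hn hnQ
  refine lt_of_le_of_lt ?_ hn
  have h2 : n ≤ 2 * Q * (n / Q) := by
    have h3 := Nat.lt_mul_div_succ n hQ
    have h4 : 1 ≤ n / Q := (Nat.one_le_div_iff hQ).2 hnQ
    nlinarith
  have h3 : (n : ℝ) ≤ 2 * Q * (n / Q : ℕ) := by exact_mod_cast h2
  calc (n : ℝ) ^ 2 * (995 / 1000) ^ (n / Q)
      ≤ (2 * Q * (n / Q : ℕ)) ^ 2 * (995 / 1000) ^ (n / Q) := by gcongr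
    _ = _ := by simp only [Function.comp_apply]; ring

theorem eventually_linear_lt_exp {c : ℝ} (hc : 0 < c) (g : ℝ) (hg : 0 ≤ g) :
    ∀ᶠ n : ℕ in atTop, 2 * (2 * n + 1) * g < Real.exp (c * n) := by
  filter_upwards [eventually_ge_atTop 1,
    tendsto_natCast_atTop_atTop.eventually_ge_atTop (12 * g / c ^ 2)] with n hn1 hn
  have h1 : (1 : ℝ) ≤ n := by exact_mod_cast hn1
  have h2 := Real.quadratic_le_exp_of_nonneg (by positivity : 0 ≤ c * n)
  rw [div_le_iff₀ (by positivity)] at hn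
  have h3 : 12 * g * n ≤ n * c ^ 2 * n := by gcongr
  have h4 : g * 1 ≤ g * n := by gcongr
  have h5 : 0 ≤ c * n := by positivity
  linarith

open Classical in
theorem abs_card_filter_sub_le {V J : Type*} [Fintype V] [Fintype J] {χ : V → J} {A : Finset V}
    {a e : ℝ} (h : ∀ j, |((A.filter fun v => χ v = j).card : ℝ) - a| ≤ e) (P : J → Prop) :
    |((A.filter fun v => P (χ v)).card : ℝ) - a * (Finset.univ.filter P).card| ≤
      e * (Finset.univ.filter P).card := by
  have h1 : (A.filter fun v => P (χ v)).card =
      ∑ j ∈ Finset.univ.filter P, (A.filter fun v => χ v = j).card := by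
    rw [Finset.card_eq_sum_card_fiberwise (f := χ) (t := Finset.univ.filter P)
      (fun v hv => by simpa using (Finset.mem_filter.1 hv).2)]
    refine Finset.sum_congr rfl fun j hj => ?_
    rw [Finset.filter_filter]
    congr 1
    ext v
    simp only [Finset.mem_filter, Finset.mem_univ, true_and] at hj ⊢
    constructor
    · exact fun hv => ⟨hv.1, hv.2.2⟩
    · exact fun hv => ⟨hv.1, hv.2.symm ▸ hj, hv.2⟩
  rw [h1, Nat.cast_sum, mul_comm a, mul_comm e, ← nsmul_eq_mul, ← nsmul_eq_mul,
    ← Finset.sum_const, ← Finset.sum_const, ← Finset.sum_sub_distrib]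
  exact (Finset.abs_sum_le_sum_abs _ _).trans (Finset.sum_le_sum fun j _ => h j)

open Classical in
/-- An almost regular digraph has a labelling dividing every neighbourhood evenly. -/
theorem exists_equitable_labelling {V J : Type*} [Fintype V] [Fintype J] [Nonempty J]
    {G : V → V → Prop} {η p : ℝ} (hη0 : 0 < η) (hη1 : η ≤ 1)
    (hp : (Fintype.card V : ℝ) = p * Fintype.card J)
    (hout : ∀ x, |((Finset.univ.filter fun w => G x w).card : ℝ) - 1 / 2 * Fintype.card V| ≤
      η / 2 * Fintype.card V)
    (hin : ∀ x, |((Finset.univ.filter fun w => G w x).card : ℝ) - 1 / 2 * Fintype.card V| ≤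
      η / 2 * Fintype.card V)
    (hn : 2 * (2 * Fintype.card V + 1) * (Fintype.card J : ℝ) <
      Real.exp ((η / (2 * Fintype.card J)) ^ 2 / 4 * Fintype.card V)) :
    ∃ χ : V → J,
      (∀ v (P : J → Prop),
        (1 / 2 - η) * p * (Finset.univ.filter P).card ≤
          (Finset.univ.filter fun w => G v w ∧ P (χ w)).card ∧
        ((Finset.univ.filter fun w => G v w ∧ P (χ w)).card : ℝ) ≤
          (1 / 2 + η) * p * (Finset.univ.filter P).card) ∧
      (∀ v (P : J → Prop),
        (1 / 2 - η) * p * (Finset.univ.filter P).card ≤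
          (Finset.univ.filter fun w => G w v ∧ P (χ w)).card ∧
        ((Finset.univ.filter fun w => G w v ∧ P (χ w)).card : ℝ) ≤
          (1 / 2 + η) * p * (Finset.univ.filter P).card) ∧
      ∀ P : J → Prop,
        (1 - η) * p * (Finset.univ.filter P).card ≤
          (Finset.univ.filter fun w => P (χ w)).card ∧
        ((Finset.univ.filter fun w => P (χ w)).card : ℝ) ≤
          (1 + η) * p * (Finset.univ.filter P).card := by
  have hg : (1 : ℝ) ≤ Fintype.card J := by exact_mod_cast Fintype.card_pos
  have hg0 : (0 : ℝ) < Fintype.card J := by linarith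
  set A : Option (V ⊕ V) → Finset V := fun t => t.elim Finset.univ
    (Sum.elim (fun x => Finset.univ.filter fun w => G x w)
      fun x => Finset.univ.filter fun w => G w x) with hA
  have hε1 : η / (2 * Fintype.card J) ≤ 1 := by
    rw [div_le_one (by positivity)]
    linarith
  have hcard : Fintype.card (Option (V ⊕ V)) = 2 * Fintype.card V + 1 := by
    rw [Fintype.card_option, Fintype.card_sum, two_mul]
  obtain ⟨χ, hχ⟩ := exists_even_partition (J := J) A (by positivity) hε1 (by
    rw [hcard]
    push_cast
    exact hn)
  have hε : η / (2 * Fintype.card J) * Fintype.card V = η / 2 * p := by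
    rw [hp]
    field_simp
  have hkey : ∀ t (b : ℝ), |((A t).card : ℝ) - b * Fintype.card V| ≤ η / 2 * Fintype.card V →
      ∀ P : J → Prop,
        (b - η) * p * (Finset.univ.filter P).card ≤ ((A t).filter fun w => P (χ w)).card ∧
        (((A t).filter fun w => P (χ w)).card : ℝ) ≤ (b + η) * p * (Finset.univ.filter P).card := by
    intro t b hb P
    rw [hε] at hχ
    have h1 := abs_le.1 (abs_card_filter_sub_le (hχ t) P)
    have h2 : |((A t).card : ℝ) / Fintype.card J - b * p| ≤ η / 2 * p := by
      rw [hp, ← mul_assoc, ← mul_assoc, ← div_le_iff₀ hg0, ← abs_of_pos hg0, ← abs_div,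
        abs_of_pos hg0, sub_div, mul_div_cancel_right₀ _ hg0.ne'] at hb
      exact hb
    obtain ⟨h3, h4⟩ := abs_le.1 h2
    have h5 : (0 : ℝ) ≤ (Finset.univ.filter P).card := Nat.cast_nonneg _
    have h6 : (b * p - η / 2 * p) * (Finset.univ.filter P).card ≤
        (A t).card / Fintype.card J * (Finset.univ.filter P).card :=
      mul_le_mul_of_nonneg_right (by linarith) h5
    have h7 : (A t).card / Fintype.card J * (Finset.univ.filter P).card ≤
        (b * p + η / 2 * p) * (Finset.univ.filter P).card :=
      mul_le_mul_of_nonneg_right (by linarith) h5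
    constructor <;> linarith
  refine ⟨χ, fun v P => ?_, fun v P => ?_, fun P => ?_⟩
  · have h1 := hkey (some (Sum.inl v)) (1 / 2) (hout v) P
    simpa only [hA, Option.elim_some, Sum.elim_inl, Finset.filter_filter] using h1
  · have h1 := hkey (some (Sum.inr v)) (1 / 2) (hin v) P
    simpa only [hA, Option.elim_some, Sum.elim_inr, Finset.filter_filter] using h1
  · have h1 := hkey none 1 (by
      simp only [hA, Option.elim_none, Finset.card_univ, one_mul, sub_self, abs_zero]
      positivity) P
    simpa only [hA, Option.elim_none] using h1

open Classical in
theorem abs_card_neighbours_sub_le {V : Type*} [Fintype V] {G : V → V → Prop}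
    (hG : IsOriented G) {η : ℝ} (x : V)
    (hout : (1 / 2 - η) * (Fintype.card V : ℝ) ≤ outDeg G x)
    (hin : (1 / 2 - η) * (Fintype.card V : ℝ) ≤ inDeg G x) :
    |((Finset.univ.filter fun w => G x w).card : ℝ) - 1 / 2 * Fintype.card V| ≤
      η * Fintype.card V ∧
    |((Finset.univ.filter fun w => G w x).card : ℝ) - 1 / 2 * Fintype.card V| ≤
      η * Fintype.card V := by
  rw [outDeg, Nat.card_eq_fintype_card, Fintype.card_subtype] at hout
  rw [inDeg, Nat.card_eq_fintype_card, Fintype.card_subtype] at hin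
  have h1 : (Finset.univ.filter fun w => G x w).card + (Finset.univ.filter fun w => G w x).card ≤
      Fintype.card V := by
    rw [← Finset.card_union_of_disjoint (Finset.disjoint_filter.2 fun w _ => hG x w)]
    exact Finset.card_le_univ _
  have h2 : ((Finset.univ.filter fun w => G x w).card : ℝ) +
      (Finset.univ.filter fun w => G w x).card ≤ Fintype.card V := by exact_mod_cast h1
  constructor <;> rw [abs_le] <;> constructor <;> linarith

end Main

/-- For every η₁ > 0 there exist n₀ and η₂ > 0 such that every oriented graph on n ≥ n₀
vertices with minimum semidegree at least (1/2 − η₂)n contains at least (1/2 − η₁)n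
pairwise edge-disjoint Hamilton cycles. -/
theorem oriented_edge_disjoint_hamilton (η₁ : ℝ) (hη₁ : 0 < η₁) :
    ∃ (n₀ : ℕ) (η₂ : ℝ), 0 < η₂ ∧
      ∀ (V : Type) [Fintype V] (G : V → V → Prop),
        IsOriented G →
        n₀ ≤ Fintype.card V →
        (∀ x : V, (1 / 2 - η₂) * (Fintype.card V : ℝ) ≤ (outDeg G x : ℝ) ∧
          (1 / 2 - η₂) * (Fintype.card V : ℝ) ≤ (inDeg G x : ℝ)) →
        ∃ (m : ℕ) (C : Fin m → ZMod (Fintype.card V) → V),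
          (1 / 2 - η₁) * (Fintype.card V : ℝ) ≤ (m : ℝ) ∧
          (∀ j, IsHamCycle G (C j)) ∧
          ∀ j k : Fin m, j ≠ k → ∀ x y : V,
            (∃ i, C j i = x ∧ C j (i + 1) = y) →
            ¬ ∃ i, C k i = x ∧ C k (i + 1) = y := by
  classical
  obtain ⟨r, q, s, hr, hq, hs, hsp, h1s, h1q⟩ := exists_separated_parameters hη₁
  have hr0 : 0 < r := by omega
  have hq0 : 0 < q := by omega
  have hs2 : s ≠ 2 := by
    have : q ^ 2 ≥ 1 := Nat.one_le_pow _ _ hq0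
    omega
  have hs0 : (0 : ℝ) < s := by exact_mod_cast hsp.pos
  have : NeZero r := ⟨hr0.ne'⟩
  have : NeZero q := ⟨hq0.ne'⟩
  have : NeZero s := ⟨hsp.ne_zero⟩
  have : Fact s.Prime := ⟨hsp⟩
  have hg0 : 0 < Fintype.card (Cell r q s) := Fintype.card_pos
  have hgR : (0 : ℝ) < Fintype.card (Cell r q s) := by exact_mod_cast hg0
  obtain ⟨η, hη0, hηs, h1η⟩ : ∃ η : ℝ, 0 < η ∧ η * s ≤ 1 / 1000 ∧ 10 * (η * s) ≤ η₁ := by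
    refine ⟨min (1 / 1000) (η₁ / 10) / s, by positivity, ?_, ?_⟩ <;>
      rw [div_mul_cancel₀ _ hs0.ne']
    · exact min_le_left _ _
    · linarith [min_le_right (1 / 1000) (η₁ / 10)]
  have hη1 : η ≤ 1 := by
    have h1 : (1 : ℝ) ≤ s := by exact_mod_cast hsp.one_le
    have h2 : η * 1 ≤ η * s := by gcongr
    linarith
  obtain ⟨Q, hQ⟩ : ∃ Q : ℕ, Q = 2 * 10 ^ 9 * q := ⟨_, rfl⟩
  obtain ⟨n₀, hn₀⟩ := Filter.eventually_atTop.1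
    ((((eventually_sq_mul_pow_div_lt_one (by omega : 0 < Q)).and
      (eventually_linear_lt_exp
        (by positivity : 0 < (η / (2 * Fintype.card (Cell r q s))) ^ 2 / 4) _ hgR.le)).and
      (tendsto_natCast_atTop_atTop.eventually_ge_atTop (10 * (r * q * s ^ 2 : ℝ) / η₁))).and
      (Filter.eventually_ge_atTop (10 ^ 13 * q ^ 2 * s)))
  refine ⟨n₀, η / 2, by positivity, fun V _ G hG hV hdeg => ?_⟩
  obtain ⟨⟨⟨hlog, hexp⟩, h1n⟩, hn⟩ := hn₀ _ hV
  rw [div_le_iff₀' hη₁] at h1n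
  obtain ⟨p, hp⟩ : ∃ p : ℝ, (Fintype.card V : ℝ) = p * Fintype.card (Cell r q s) :=
    ⟨_, (div_mul_cancel₀ _ hgR.ne').symm⟩
  obtain ⟨χ, hout, hin, hχ⟩ := exists_equitable_labelling (J := Cell r q s) hη0 hη1 hp
    (fun x => (abs_card_neighbours_sub_le hG x (hdeg x).1 (hdeg x).2).1)
    (fun x => (abs_card_neighbours_sub_le hG x (hdeg x).1 (hdeg x).2).2) hexp
  rw [card_cell] at hp
  obtain ⟨δ, Δ, d, κ, hδ, hΔ, hκ, hd, hpool, hm, hN, hcount⟩ :=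
    exists_packing_sizes (Q := Q) (by rw [hQ]; push_cast; ring) hr hq hs hη0 hηs hp h1s h1q h1η
      h1n hn
  obtain ⟨N, f, hfN, hf, hdisj⟩ := exists_disjoint_isHamCycle_of_labelling hG hs2 χ hout hin hχ hp
    hη1 hδ hΔ hκ hd hpool hm hN hlog
  exact ⟨N, f, hcount.trans (by exact_mod_cast hfN), hf, hdisj⟩
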